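/- Main theorem: the Böhm preorder ⊑B, the black type preorder ⊑•type, and the interaction preorder ⊑int coincide on λ-terms; consequently the λ-theories induced by Böhm-tree equality, black type equivalence, and interaction equivalence ≡int coincide. -/

import Mathlib

set_option autoImplicit false

/-! ### Players -/

inductive Player : Type
  | white
  | black
deriving DecidableEq

/-- The opposite player. -/
def Player.op : Player → Player
  | .white => .black
  | .black => .white

/-- `gamma p q` is `0` if the players agree (silent) and `1` otherwise (interaction). -/
def Player.gamma (p q : Player) : ℕ := if p = q then 0 else 1

/-! ### Ordinary λ-terms (de Bruijn representation) -/

inductive Lam : Type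
  | var : ℕ → Lam
  | lam : Lam → Lam
  | app : Lam → Lam → Lam
deriving DecidableEq

namespace Lam

/-- Shift the free de Bruijn indices ≥ `d` by one. -/
def liftAt : Lam → ℕ → Lam
  | .var n, d => .var (if n < d then n else n + 1)
  | .lam t, d => .lam (t.liftAt (d + 1))
  | .app t u, d => .app (t.liftAt d) (u.liftAt d)

/-- Capture-avoiding substitution of `u` for the de Bruijn index `x`. -/
def subst : Lam → ℕ → Lam → Lam
  | .var n, x, u => if n = x then u else if x < n then .var (n - 1) else .var n
  | .lam t, x, u => .lam (t.subst (x + 1) (u.liftAt 0))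
  | .app t s, x, u => .app (t.subst x u) (s.subst x u)

end Lam

/-- Root β-rule: `(λx.t) u ↦ t[x:=u]`. -/
inductive LBetaRoot : Lam → Lam → Prop
  | beta (t u : Lam) : LBetaRoot (.app (.lam t) u) (t.subst 0 u)

/-- Root η-rule: `λx. t x ↦ t` with `x ∉ FV(t)` (enforced by the lifting). -/
inductive LEtaRoot : Lam → Lam → Prop
  | eta (t : Lam) : LEtaRoot (.lam (.app (t.liftAt 0) (.var 0))) t

/-- Closure of a root relation under all contexts. -/
inductive LFull (R : Lam → Lam → Prop) : Lam → Lam → Prop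
  | root {t u : Lam} : R t u → LFull R t u
  | lam {t u : Lam} : LFull R t u → LFull R (.lam t) (.lam u)
  | appL {t t' : Lam} (u : Lam) : LFull R t t' → LFull R (.app t u) (.app t' u)
  | appR (t : Lam) {u u' : Lam} : LFull R u u' → LFull R (.app t u) (.app t u')

/-- Closure under applicative spine contexts `⟨·⟩ t1 … tk`. -/
inductive LSpine (R : Lam → Lam → Prop) : Lam → Lam → Prop
  | root {t u : Lam} : R t u → LSpine R t u
  | appL {t t' : Lam} (u : Lam) : LSpine R t t' → LSpine R (.app t u) (.app t' u)

/-- Closure under head contexts `λx1…xn.⟨·⟩ t1 … tk`. -/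
inductive LHead (R : Lam → Lam → Prop) : Lam → Lam → Prop
  | spine {t u : Lam} : LSpine R t u → LHead R t u
  | lam {t u : Lam} : LHead R t u → LHead R (.lam t) (.lam u)

/-- β-reduction. -/
def LBeta : Lam → Lam → Prop := LFull LBetaRoot
/-- η-reduction. -/
def LEta : Lam → Lam → Prop := LFull LEtaRoot
/-- Head reduction. -/
def LHStep : Lam → Lam → Prop := LHead LBetaRoot
/-- Multistep head reduction. -/
def LHSteps : Lam → Lam → Prop := Relation.ReflTransGen LHStep

/-- β-conversion (reflexive-symmetric-transitive closure of β-reduction). -/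
def LBetaConv : Lam → Lam → Prop :=
  Relation.ReflTransGen (fun a b => LBeta a b ∨ LBeta b a)
/-- η-conversion. -/
def LEtaConv : Lam → Lam → Prop :=
  Relation.ReflTransGen (fun a b => LEta a b ∨ LEta b a)

/-- Head normal forms: no head step out of `t`. -/
def Lam.LHNF (t : Lam) : Prop := ∀ u, ¬ LHStep t u

/-- Head convergence: `t ⇓h`. -/
def Lam.HConv (t : Lam) : Prop := ∃ h, LHSteps t h ∧ h.LHNF

/-- Ordinary contexts (one hole). -/
inductive LCtx : Type
  | hole : LCtx
  | lam : LCtx → LCtx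
  | appL : LCtx → Lam → LCtx
  | appR : Lam → LCtx → LCtx

/-- Plugging (allowing variable capture). -/
def LCtx.fill : LCtx → Lam → Lam
  | .hole, t => t
  | .lam C, t => .lam (C.fill t)
  | .appL C u, t => .app (C.fill t) u
  | .appR s C, t => .app s (C.fill t)

/-- Head contextual preorder on λ-terms. -/
def CtxLe (t u : Lam) : Prop := ∀ C : LCtx, (C.fill t).HConv → (C.fill u).HConv

/-! ### Checkers terms -/

inductive CTerm : Type
  | var : ℕ → CTerm
  | lam : Player → CTerm → CTerm
  | app : Player → CTerm → CTerm → CTerm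
deriving DecidableEq

namespace CTerm

/-- Shift the free de Bruijn indices ≥ `d` by one. -/
def liftAt : CTerm → ℕ → CTerm
  | .var n, d => .var (if n < d then n else n + 1)
  | .lam p t, d => .lam p (t.liftAt (d + 1))
  | .app p t u, d => .app p (t.liftAt d) (u.liftAt d)

/-- Capture-avoiding substitution of `u` for the de Bruijn index `x`. -/
def subst : CTerm → ℕ → CTerm → CTerm
  | .var n, x, u => if n = x then u else if x < n then .var (n - 1) else .var n
  | .lam p t, x, u => .lam p (t.subst (x + 1) (u.liftAt 0))
  | .app p t s, x, u => .app p (t.subst x u) (s.subst x u)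

/-- The underlying ordinary λ-term of a checkers term. -/
def untag : CTerm → Lam
  | .var n => .var n
  | .lam _ t => .lam t.untag
  | .app _ t u => .app t.untag u.untag

end CTerm

/-- Player lifting: tag every abstraction and application with player `p`. -/
def Lam.tag : Lam → Player → CTerm
  | .var n, _ => .var n
  | .lam t, p => .lam p (t.tag p)
  | .app t u, p => .app p (t.tag p) (u.tag p)

/-- Silent β root rule: the abstraction and the application carry the same player. -/
inductive SilentRoot : CTerm → CTerm → Prop
  | beta (p : Player) (t u : CTerm) : SilentRoot (.app p (.lam p t) u) (t.subst 0 u)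

/-- Interaction β root rule: the application carries the opposite player of the abstraction. -/
inductive InterRoot : CTerm → CTerm → Prop
  | beta (p : Player) (t u : CTerm) : InterRoot (.app p.op (.lam p t) u) (t.subst 0 u)

/-- Closure of a root relation under all checkers contexts. -/
inductive CFull (R : CTerm → CTerm → Prop) : CTerm → CTerm → Prop
  | root {t u : CTerm} : R t u → CFull R t u
  | lam (p : Player) {t u : CTerm} : CFull R t u → CFull R (.lam p t) (.lam p u)
  | appL (p : Player) {t t' : CTerm} (u : CTerm) : CFull R t t' → CFull R (.app p t u) (.app p t' u)
  | appR (p : Player) (t : CTerm) {u u' : CTerm} : CFull R u u' → CFull R (.app p t u) (.app p t u')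

/-- Closure under applicative spine contexts `⟨·⟩ @_{q1} t1 … @_{qk} tk`. -/
inductive CSpine (R : CTerm → CTerm → Prop) : CTerm → CTerm → Prop
  | root {t u : CTerm} : R t u → CSpine R t u
  | appL (p : Player) {t t' : CTerm} (u : CTerm) : CSpine R t t' → CSpine R (.app p t u) (.app p t' u)

/-- Closure under checkers head contexts `λ_{p1}x1…λ_{pn}xn.⟨·⟩ @_{q1} t1 … @_{qk} tk`. -/
inductive CHead (R : CTerm → CTerm → Prop) : CTerm → CTerm → Prop
  | spine {t u : CTerm} : CSpine R t u → CHead R t u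
  | lam (p : Player) {t u : CTerm} : CHead R t u → CHead R (.lam p t) (.lam p u)

/-- Silent β-reduction `→τ`. -/
def StepTau : CTerm → CTerm → Prop := CFull SilentRoot
/-- Interaction β-reduction `→⊛`. -/
def StepInt : CTerm → CTerm → Prop := CFull InterRoot
/-- Checkers β-reduction `→βch`. -/
def StepBch (t u : CTerm) : Prop := StepTau t u ∨ StepInt t u

/-- Silent head reduction `→hτ`. -/
def HStepTau : CTerm → CTerm → Prop := CHead SilentRoot
/-- Interaction head reduction `→h⊛`. -/
def HStepInt : CTerm → CTerm → Prop := CHead InterRoot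
/-- Checkers head reduction `→hch`. -/
def HStepCh (t u : CTerm) : Prop := HStepTau t u ∨ HStepInt t u

/-- Checkers head normal form. -/
def CTerm.HNF (t : CTerm) : Prop := ∀ u, ¬ HStepCh t u

/-- `BigStep t k` means `t ⇓^k`: the (deterministic) checkers head evaluation of `t`
terminates and performs exactly `k` interaction steps. -/
inductive BigStep : CTerm → ℕ → Prop
  | nf {t : CTerm} : t.HNF → BigStep t 0
  | silent {t u : CTerm} {k : ℕ} : HStepTau t u → BigStep u k → BigStep t k
  | inter {t u : CTerm} {k : ℕ} : HStepInt t u → BigStep u k → BigStep t (k + 1)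

/-- `HRed t n i u`: a checkers head reduction sequence from `t` to `u` of length `n`
containing exactly `i` interaction steps. -/
inductive HRed : CTerm → ℕ → ℕ → CTerm → Prop
  | refl (t : CTerm) : HRed t 0 0 t
  | silent {t u s : CTerm} {n i : ℕ} : HStepTau t u → HRed u n i s → HRed t (n + 1) i s
  | inter {t u s : CTerm} {n i : ℕ} : HStepInt t u → HRed u n i s → HRed t (n + 1) (i + 1) s

/-- Checkers contexts (one hole). -/
inductive CCtx : Type
  | hole : CCtx
  | lam : Player → CCtx → CCtx
  | appL : Player → CCtx → CTerm → CCtx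
  | appR : Player → CTerm → CCtx → CCtx

/-- Plugging (allowing variable capture). -/
def CCtx.fill : CCtx → CTerm → CTerm
  | .hole, t => t
  | .lam p C, t => .lam p (C.fill t)
  | .appL p C u, t => .app p (C.fill t) u
  | .appR p s C, t => .app p s (C.fill t)

/-- Player lifting of ordinary contexts. -/
def LCtx.tag : LCtx → Player → CCtx
  | .hole, _ => .hole
  | .lam C, p => .lam p (C.tag p)
  | .appL C u, p => .appL p (C.tag p) (u.tag p)
  | .appR s C, p => .appR p (s.tag p) (C.tag p)

/-- Checkers interaction preorder `≼ctx⊛` on checkers terms. -/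
def IntCtxLe (t u : CTerm) : Prop :=
  ∀ (C : CCtx) (k : ℕ), BigStep (C.fill t) k → BigStep (C.fill u) k

/-- Checkers interaction improvement `≼imp⊛` on checkers terms. -/
def ImpCtxLe (t u : CTerm) : Prop :=
  ∀ (C : CCtx) (k : ℕ), BigStep (C.fill t) k → ∃ k', k' ≤ k ∧ BigStep (C.fill u) k'

/-- Interaction preorder `⊑int` on ordinary λ-terms, via black lifting. -/
def IntLe (t u : Lam) : Prop := IntCtxLe (t.tag .black) (u.tag .black)

/-- Interaction improvement `⊑int·imp` on ordinary λ-terms, via black lifting. -/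
def ImpLe (t u : Lam) : Prop := ImpCtxLe (t.tag .black) (u.tag .black)

/-- Interaction equivalence `≡int`. -/
def IntEq (t u : Lam) : Prop := IntLe t u ∧ IntLe u t

/-- Silent conversion `=τ`: reflexive-symmetric-transitive closure of `→τ`. -/
def SilentConv : CTerm → CTerm → Prop :=
  Relation.ReflTransGen (fun a b => StepTau a b ∨ StepTau b a)


/-! ### Checkers multi types -/

/-- Linear types: an atom `X` and arrows `M →_{p,q} L`, where a multi type `M`
is a finite multiset of linear types (syntactically represented as a list). -/
inductive LType : Type
  | atom : LType
  | arrow : List LType → Player → Player → LType → LType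

/-- Type environments: a multi type for every de Bruijn index. -/
abbrev TEnv : Type := ℕ → Multiset LType

/-- The empty type environment. -/
def TEnv.zero : TEnv := fun _ => 0

/-- Pointwise multiset union of type environments. -/
def TEnv.add (Γ Δ : TEnv) : TEnv := fun n => Γ n + Δ n

/-- The environment assigning `[L]` to `x` and `0` elsewhere. -/
def TEnv.single (x : ℕ) (L : LType) : TEnv := fun n => if n = x then {L} else 0

/-- Extend an environment with a multi type for the freshly bound de Bruijn index `0`. -/
def TEnv.cons (M : Multiset LType) (Γ : TEnv) : TEnv := fun n =>
  match n with
  | 0 => M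
  | n + 1 => Γ n

mutual
  /-- Type derivations `π ▷ Γ ⊢^k t : L` of the checkers multi type system. -/
  inductive Deriv : TEnv → ℕ → CTerm → LType → Type
    | ax (x : ℕ) (L : LType) : Deriv (TEnv.single x L) 0 (.var x) L
    | lam {Γ : TEnv} {k : ℕ} {t : CTerm} {L : LType} (p q : Player) (M : List LType) :
        Deriv (TEnv.cons (Multiset.ofList M) Γ) k t L →
        Deriv Γ k (.lam p t) (.arrow M p q L)
    | app {Γ Δ : TEnv} {k₁ k₂ : ℕ} {t u : CTerm} {M : List LType} {p q : Player} {L : LType} :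
        Deriv Γ k₁ t (.arrow M p q L) → DerivM Δ k₂ u M →
        Deriv (TEnv.add Γ Δ) (k₁ + k₂ + Player.gamma p q) (.app q t u) L
  /-- Derivations `Γ ⊢^k t : M` of a multi type (the `many` rule). -/
  inductive DerivM : TEnv → ℕ → CTerm → List LType → Type
    | nil (t : CTerm) : DerivM TEnv.zero 0 t []
    | cons {Γ Δ : TEnv} {k k' : ℕ} {t : CTerm} {L : LType} {M : List LType} :
        Deriv Γ k t L → DerivM Δ k' t M → DerivM (TEnv.add Γ Δ) (k + k') t (L :: M)
end

mutual
  /-- The (applicative) size `|π|` of a derivation: its number of `@` rules. -/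
  def Deriv.size {Γ : TEnv} {k : ℕ} {t : CTerm} {L : LType} : Deriv Γ k t L → ℕ
    | .ax _ _ => 0
    | .lam _ _ _ π => Deriv.size π
    | .app π μ => Deriv.size π + DerivM.size μ + 1
  /-- Size of a multi-type derivation. -/
  def DerivM.size {Γ : TEnv} {k : ℕ} {t : CTerm} {M : List LType} : DerivM Γ k t M → ℕ
    | .nil _ => 0
    | .cons π μ => Deriv.size π + DerivM.size μ
end

/-- Typability `Γ ⊢^k t : L`. -/
def TJ (Γ : TEnv) (k : ℕ) (t : CTerm) (L : LType) : Prop := Nonempty (Deriv Γ k t L)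

/-- Checkers relational interpretation `⟦t⟧⊛ = {(Γ, k, L) | Γ ⊢^k t : L}`. -/
def CSem (t : CTerm) : Set (TEnv × ℕ × LType) := {x | TJ x.1 x.2.1 t x.2.2}

/-- Black type preorder `⊑•type` on ordinary λ-terms. -/
def BTypeLe (t u : Lam) : Prop := CSem (t.tag .black) ⊆ CSem (u.tag .black)

/-! ### Tight typings -/

/-- All arrows occurring in a linear type are silent (`p = q`). -/
inductive AllSilent : LType → Prop
  | atom : AllSilent .atom
  | arrow {M : List LType} {p : Player} {L : LType} :
      (∀ L' ∈ M, AllSilent L') → AllSilent L → AllSilent (.arrow M p p L)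

/-- The number of nonempty multi types occurring in a linear type. -/
def LType.neCount : LType → ℕ
  | .atom => 0
  | .arrow M _ _ L =>
      min M.length 1 + (M.attach.map fun x => LType.neCount x.1).sum + LType.neCount L
decreasing_by
  · have := List.sizeOf_lt_of_mem x.2
    simp only [LType.arrow.sizeOf_spec]
    omega
  · simp only [LType.arrow.sizeOf_spec]
    omega

/-- The number of nonempty multi types occurring in a multi type (counting itself). -/
def mNeCount (m : Multiset LType) : ℕ :=
  min (Multiset.card m) 1 + (m.map LType.neCount).sum

/-- A typing `(Γ, L)` is tight when all the multi types occurring in `Γ` and `L`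
are empty except for exactly one, and all arrows occurring in `(Γ, L)` are silent. -/
def Tight (Γ : TEnv) (L : LType) : Prop :=
  AllSilent L ∧ (∀ n : ℕ, ∀ L' ∈ Γ n, AllSilent L') ∧
    ∃ S : Finset ℕ, (∀ n : ℕ, n ∉ S → Γ n = 0) ∧
      (∑ n ∈ S, mNeCount (Γ n)) + LType.neCount L = 1

/-! ### Böhm preorders -/

/-- `n` abstractions in front of a term. -/
def Lam.absN : ℕ → Lam → Lam
  | 0, t => t
  | n + 1, t => .lam (Lam.absN n t)

/-- Left-nested application of a term to a list of arguments. -/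
def Lam.appList : Lam → List Lam → Lam
  | t, [] => t
  | t, u :: us => Lam.appList (.app t u) us

/-- One unfolding of the Böhm preorder clauses. -/
def BohmClause (R : Lam → Lam → Prop) (t u : Lam) : Prop :=
  (¬ t.HConv) ∨
    ∃ (n y : ℕ) (ts us : List Lam),
      ts.length = us.length ∧
      LHSteps t (Lam.absN n (Lam.appList (.var y) ts)) ∧
      LHSteps u (Lam.absN n (Lam.appList (.var y) us)) ∧
      ∀ (i : ℕ) (hi : i < ts.length) (hj : i < us.length), R (ts.get ⟨i, hi⟩) (us.get ⟨i, hj⟩)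

/-- The Böhm preorder `⊑B`: the largest relation closed under the clauses. -/
def BohmLe (t u : Lam) : Prop :=
  ∃ R : Lam → Lam → Prop, (∀ a b, R a b → BohmClause R a b) ∧ R t u

/-- One unfolding of the extensional Böhm preorder clauses. -/
def BohmEtaClause (R : Lam → Lam → Prop) (t u : Lam) : Prop :=
  (¬ t.HConv) ∨
    ∃ (n y : ℕ) (ts us : List Lam) (h h' : Lam),
      ts.length = us.length ∧
      LHSteps t h ∧ h.LHNF ∧ LEtaConv h (Lam.absN n (Lam.appList (.var y) ts)) ∧
      LHSteps u h' ∧ h'.LHNF ∧ LEtaConv h' (Lam.absN n (Lam.appList (.var y) us)) ∧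
      ∀ (i : ℕ) (hi : i < ts.length) (hj : i < us.length), R (ts.get ⟨i, hi⟩) (us.get ⟨i, hj⟩)

/-- The extensional Böhm preorder `⊑Bλη`: the largest relation closed under the clauses. -/
def BohmEtaLe (t u : Lam) : Prop :=
  ∃ R : Lam → Lam → Prop, (∀ a b, R a b → BohmEtaClause R a b) ∧ R t u



namespace BTI

/-! ### Weighted typing predicate, defined by recursion on the term -/

abbrev Wt : Type := TEnv × ℕ × ℕ

def Many (P : Wt → LType → Prop) : Wt → List LType → Prop
  | w, [] => w = 0
  | w, L :: M => ∃ w1 w2, w = w1 + w2 ∧ P w1 L ∧ Many P w2 M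

def TD : CTerm → Wt → LType → Prop
  | .var x, w, L => w = (TEnv.single x L, 0, 0)
  | .lam p t, w, L => ∃ (M : List LType) (q : Player) (L' : LType), L = .arrow M p q L' ∧
      TD t (TEnv.cons (Multiset.ofList M) w.1, w.2) L'
  | .app q t u, w, L => ∃ (w1 w2 : Wt) (M : List LType) (p : Player),
      w = w1 + w2 + ((0 : TEnv), Player.gamma p q, 1) ∧
      TD t w1 (.arrow M p q L) ∧ Many (TD u) w2 M

mutual
theorem Deriv_TD {Γ : TEnv} {k : ℕ} {t : CTerm} {L : LType} :
    Deriv Γ k t L → ∃ s, TD t (Γ, k, s) L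
  | .ax x L => ⟨0, rfl⟩
  | .lam p q M π => by
      obtain ⟨s, hs⟩ := Deriv_TD π
      exact ⟨s, M, q, _, rfl, hs⟩
  | .app π μ => by
      obtain ⟨s, hs⟩ := Deriv_TD π
      obtain ⟨s', hs'⟩ := DerivM_TD μ
      refine ⟨s + s' + 1, _, _, _, _, ?_, hs, hs'⟩
      simp
      rfl
theorem DerivM_TD {Γ : TEnv} {k : ℕ} {t : CTerm} {M : List LType} :
    DerivM Γ k t M → ∃ s, Many (TD t) (Γ, k, s) M
  | .nil _ => ⟨0, rfl⟩
  | .cons π μ => by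
      obtain ⟨s, hs⟩ := Deriv_TD π
      obtain ⟨s', hs'⟩ := DerivM_TD μ
      exact ⟨s + s', _, _, rfl, hs, hs'⟩
end

theorem Many_DerivM {t : CTerm}
    (h : ∀ (w : Wt) L, TD t w L → Nonempty (Deriv w.1 w.2.1 t L)) :
    ∀ (M : List LType) (w : Wt), Many (TD t) w M → Nonempty (DerivM w.1 w.2.1 t M) := by
  intro M
  induction M with
  | nil => rintro w hw; cases hw; exact ⟨.nil t⟩
  | cons L M ih =>
    rintro w ⟨w1, w2, rfl, h1, h2⟩
    obtain ⟨π⟩ := h _ _ h1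
    obtain ⟨μ⟩ := ih _ h2
    exact ⟨.cons π μ⟩

theorem TD_Deriv (t : CTerm) :
    ∀ (w : Wt) L, TD t w L → Nonempty (Deriv w.1 w.2.1 t L) := by
  induction t with
  | var x => rintro w L hw; cases hw; exact ⟨.ax x L⟩
  | lam p t ih =>
    rintro w L ⟨M, q, L', rfl, h⟩
    obtain ⟨π⟩ := ih _ _ h
    exact ⟨.lam p q M π⟩
  | app q t u iht ihu =>
    rintro w L ⟨w1, w2, M, p, rfl, h1, h2⟩
    obtain ⟨π⟩ := iht _ _ h1
    obtain ⟨μ⟩ := Many_DerivM ihu _ _ h2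
    have := Deriv.app π μ
    refine ⟨?_⟩
    have e : (w1 + w2 + ((0 : TEnv), Player.gamma p q, 1)).1 = TEnv.add w1.1 w2.1 := by
      funext n; simp [TEnv.add]
    rw [e]; exact this

theorem TJ_iff (Γ : TEnv) (k : ℕ) (t : CTerm) (L : LType) :
    TJ Γ k t L ↔ ∃ s, TD t (Γ, k, s) L :=
  ⟨fun ⟨π⟩ => Deriv_TD π, fun ⟨_, h⟩ => TD_Deriv t _ _ h⟩

/-- Typing preorder up to size. -/
def SemLe (t u : CTerm) : Prop :=
  ∀ Γ k s L, TD t (Γ, k, s) L → ∃ s', TD u (Γ, k, s') L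

theorem CSem_iff (t u : CTerm) : CSem t ⊆ CSem u ↔ SemLe t u := by
  constructor
  · intro h Γ k s L hs
    exact (TJ_iff _ _ _ _).1 (h (show (Γ, k, L) ∈ CSem t from (TJ_iff _ _ _ _).2 ⟨s, hs⟩))
  · rintro h ⟨Γ, k, L⟩ hx
    obtain ⟨s, hs⟩ := (TJ_iff _ _ _ _).1 hx
    exact (TJ_iff _ _ _ _).2 (h _ _ _ _ hs)

/-! ### Properties of `Many` -/

theorem many_append (P : Wt → LType → Prop) (A B : List LType) (w : Wt) :
    Many P w (A ++ B) ↔ ∃ w1 w2, w = w1 + w2 ∧ Many P w1 A ∧ Many P w2 B := by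
  induction A generalizing w with
  | nil =>
    constructor
    · intro h; exact ⟨0, w, by simp, rfl, h⟩
    · rintro ⟨w1, w2, rfl, h1, h2⟩; cases h1; simpa using h2
  | cons L A ih =>
    constructor
    · rintro ⟨w1, w2, rfl, h1, h2⟩
      obtain ⟨w3, w4, rfl, h3, h4⟩ := (ih _).1 h2
      exact ⟨w1 + w3, w4, by rw [add_assoc], ⟨w1, w3, rfl, h1, h3⟩, h4⟩
    · rintro ⟨_, w4, rfl, ⟨w1, w3, rfl, h1, h3⟩, h4⟩
      exact ⟨w1, w3 + w4, by rw [add_assoc], h1, (ih _).2 ⟨w3, w4, rfl, h3, h4⟩⟩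

theorem many_perm (P : Wt → LType → Prop) {A B : List LType} (h : A.Perm B) :
    ∀ w : Wt, Many P w A → Many P w B := by
  induction h with
  | nil => exact fun _ h => h
  | cons x _ ih => rintro w ⟨w1, w2, rfl, h1, h2⟩; exact ⟨w1, w2, rfl, h1, ih _ h2⟩
  | swap x y l =>
    rintro w ⟨w1, _, rfl, h1, w2, w3, rfl, h2, h3⟩
    exact ⟨w2, w1 + w3, by abel, h2, w1, w3, rfl, h1, h3⟩
  | trans _ _ ih1 ih2 => exact fun w h => ih2 _ (ih1 _ h)

/-! ### Lifting -/

def ins (d : ℕ) (w : Wt) : Wt :=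
  (fun n => if n < d then w.1 n else if n = d then 0 else w.1 (n - 1), w.2)

theorem ins_add (d : ℕ) (w w' : Wt) : ins d (w + w') = ins d w + ins d w' := by
  refine Prod.ext (funext fun n => ?_) rfl
  simp only [ins, Prod.fst_add, Pi.add_apply]
  split_ifs <;> simp

theorem ins_zero (d : ℕ) : ins d 0 = 0 := by
  refine Prod.ext (funext fun n => ?_) rfl
  simp [ins]

theorem ins_pure (d : ℕ) (x : ℕ × ℕ) : ins d ((0 : TEnv), x) = ((0 : TEnv), x) := by
  refine Prod.ext (funext fun n => ?_) rfl
  simp [ins]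

theorem cons_tail (Γ : TEnv) : Γ = TEnv.cons (Γ 0) (fun n => Γ (n + 1)) := by
  funext n; cases n <;> rfl

theorem ins_cons (d : ℕ) (M : Multiset LType) (w : Wt) :
    ins (d + 1) (TEnv.cons M w.1, w.2) = (TEnv.cons M (ins d w).1, (ins d w).2) := by
  refine Prod.ext (funext fun n => ?_) rfl
  cases n with
  | zero => simp [ins, TEnv.cons]
  | succ n =>
    simp only [ins, TEnv.cons]
    rcases lt_trichotomy n d with h | h | h
    · simp [h]
    · simp [h]
    · obtain ⟨m, rfl⟩ : ∃ m, n = m + 1 := ⟨n - 1, by omega⟩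
      rw [if_neg (by omega), if_neg (by omega), if_neg (by omega), if_neg (by omega)]
      rfl

theorem cons_inj {M M' : Multiset LType} {Γ Γ' : TEnv} (h : TEnv.cons M Γ = TEnv.cons M' Γ') :
    M = M' ∧ Γ = Γ' :=
  ⟨congrFun h 0, funext fun n => congrFun h (n + 1)⟩

theorem many_ins {P Q : Wt → LType → Prop} (d : ℕ)
    (h : ∀ w L, P w L ↔ ∃ w', w = ins d w' ∧ Q w' L) (M : List LType) :
    ∀ w, Many P w M ↔ ∃ w', w = ins d w' ∧ Many Q w' M := by
  induction M with
  | nil =>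
    intro w; constructor
    · intro hw; exact ⟨0, by rw [ins_zero]; exact hw, rfl⟩
    · rintro ⟨w', rfl, h⟩; cases h; exact ins_zero d
  | cons L M ih =>
    intro w; constructor
    · rintro ⟨w1, w2, rfl, h1, h2⟩
      obtain ⟨v1, rfl, g1⟩ := (h _ _).1 h1
      obtain ⟨v2, rfl, g2⟩ := (ih _).1 h2
      exact ⟨v1 + v2, (ins_add ..).symm, v1, v2, rfl, g1, g2⟩
    · rintro ⟨_, rfl, v1, v2, rfl, h1, h2⟩
      exact ⟨ins d v1, ins d v2, ins_add .., (h _ _).2 ⟨_, rfl, h1⟩, (ih _).2 ⟨_, rfl, h2⟩⟩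

theorem TD_lift (u : CTerm) : ∀ (d : ℕ) (w : Wt) (L : LType),
    TD (u.liftAt d) w L ↔ ∃ w', w = ins d w' ∧ TD u w' L := by
  induction u with
  | var x =>
    intro d w L
    simp only [CTerm.liftAt, TD, exists_eq_right]
    have : (TEnv.single (if x < d then x else x + 1) L, 0, 0)
        = ins d (TEnv.single x L, 0, 0) := by
      refine Prod.ext (funext fun n => ?_) rfl
      simp only [TEnv.single, ins]
      split_ifs <;> first | rfl | (exfalso; omega)
    rw [this]
  | lam p t ih =>
    intro d w L
    constructor
    · rintro ⟨M, q, L', rfl, h⟩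
      obtain ⟨w', e, h⟩ := (ih _ _ _).1 h
      obtain ⟨Γ, ks⟩ := w'
      rw [cons_tail Γ] at e h
      rw [ins_cons d (Γ 0) (fun n => Γ (n + 1), ks)] at e
      obtain ⟨e1, e2⟩ := Prod.ext_iff.1 e
      obtain ⟨e3, e4⟩ := cons_inj e1
      refine ⟨(fun n => Γ (n + 1), ks), Prod.ext e4 e2, M, q, L', rfl, ?_⟩
      rw [e3]; exact h
    · rintro ⟨w', rfl, M, q, L', rfl, h⟩
      refine ⟨M, q, L', rfl, (ih _ _ _).2 ⟨_, ?_, h⟩⟩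
      rw [ins_cons]
  | app q t s iht ihs =>
    intro d w L
    constructor
    · rintro ⟨w1, w2, M, p, rfl, h1, h2⟩
      obtain ⟨v1, rfl, g1⟩ := (iht _ _ _).1 h1
      obtain ⟨v2, rfl, g2⟩ := (many_ins d (ihs d) M _).1 h2
      exact ⟨_, by rw [ins_add, ins_add, ins_pure], v1, v2, M, p, rfl, g1, g2⟩
    · rintro ⟨_, rfl, w1, w2, M, p, rfl, h1, h2⟩
      exact ⟨_, _, M, p, by rw [ins_add, ins_add, ins_pure], (iht _ _ _).2 ⟨_, rfl, h1⟩,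
        (many_ins d (ihs d) M _).2 ⟨_, rfl, h2⟩⟩

/-! ### Substitution -/

def rem (x : ℕ) (w : Wt) : Wt := (fun n => if n < x then w.1 n else w.1 (n + 1), w.2)

theorem rem_add (x : ℕ) (w w' : Wt) : rem x (w + w') = rem x w + rem x w' := by
  refine Prod.ext (funext fun n => ?_) rfl
  simp only [rem, Prod.fst_add, Pi.add_apply]
  split_ifs <;> simp

theorem rem_pure (x : ℕ) (y : ℕ × ℕ) : rem x ((0 : TEnv), y) = ((0 : TEnv), y) := by
  refine Prod.ext (funext fun n => ?_) rfl
  simp [rem]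

theorem rem_zero (x : ℕ) : rem x 0 = 0 := rem_pure x 0

/-- Substitution on predicates. -/
def SubP (x : ℕ) (U P : Wt → LType → Prop) (w : Wt) (L : LType) : Prop :=
  ∃ (w1 w2 : Wt) (M : List LType), P w1 L ∧ (M : Multiset LType) = w1.1 x ∧ Many U w2 M ∧
    w = rem x w1 + w2

theorem many_sub {x : ℕ} {U P Q : Wt → LType → Prop}
    (h : ∀ w L, Q w L ↔ SubP x U P w L) (M : List LType) :
    ∀ w, Many Q w M ↔ ∃ (w1 w2 : Wt) (N : List LType), Many P w1 M ∧
      (N : Multiset LType) = w1.1 x ∧ Many U w2 N ∧ w = rem x w1 + w2 := by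
  induction M with
  | nil =>
    intro w; constructor
    · intro hw; cases hw
      exact ⟨0, 0, [], rfl, rfl, rfl, by rw [rem_zero, add_zero]⟩
    · rintro ⟨w1, w2, N, h1, h2, h3, rfl⟩
      cases h1
      have : N = [] := by simpa using h2
      subst this
      cases h3
      show rem x 0 + 0 = 0
      rw [rem_zero, add_zero]
  | cons L M ih =>
    intro w; constructor
    · rintro ⟨w1, w2, rfl, h1, h2⟩
      obtain ⟨a1, b1, N1, p1, e1, m1, rfl⟩ := (h _ _).1 h1
      obtain ⟨a2, b2, N2, p2, e2, m2, rfl⟩ := (ih _).1 h2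
      refine ⟨a1 + a2, b1 + b2, N1 ++ N2, ⟨a1, a2, rfl, p1, p2⟩, ?_,
        (many_append ..).2 ⟨_, _, rfl, m1, m2⟩, ?_⟩
      · rw [← Multiset.coe_add, e1, e2]; rfl
      · rw [rem_add]; abel
    · rintro ⟨_, w2, N, ⟨a1, a2, rfl, p1, p2⟩, e, m, rfl⟩
      have e' : N.Perm ((a1.1 x).toList ++ (a2.1 x).toList) := by
        rw [← Multiset.coe_eq_coe, e, ← Multiset.coe_add, Multiset.coe_toList,
          Multiset.coe_toList]; rfl
      obtain ⟨b1, b2, rfl, m1, m2⟩ := (many_append ..).1 (many_perm U e' _ m)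
      refine ⟨rem x a1 + b1, rem x a2 + b2, by rw [rem_add]; abel, (h _ _).2 ?_, (ih _).2 ?_⟩
      · exact ⟨a1, b1, _, p1, Multiset.coe_toList _, m1, rfl⟩
      · exact ⟨a2, b2, _, p2, Multiset.coe_toList _, m2, rfl⟩

theorem rem_single_self (x : ℕ) (L : LType) : rem x (TEnv.single x L, 0, 0) = 0 := by
  refine Prod.ext (funext fun n => ?_) rfl
  simp only [rem, TEnv.single]
  split_ifs <;> first | rfl | (exfalso; omega)

theorem rem_cons (x : ℕ) (M : Multiset LType) (w : Wt) :
    rem (x + 1) (TEnv.cons M w.1, w.2) = (TEnv.cons M (rem x w).1, (rem x w).2) := by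
  refine Prod.ext (funext fun n => ?_) rfl
  cases n with
  | zero => simp [rem, TEnv.cons]
  | succ n => simp [rem, TEnv.cons]

theorem cons_ins_add (M : Multiset LType) (w w' : Wt) :
    ((TEnv.cons M w.1, w.2) : Wt) + ins 0 w' = (TEnv.cons M (w + w').1, (w + w').2) := by
  refine Prod.ext (funext fun n => ?_) rfl
  cases n with
  | zero => simp [ins, TEnv.cons]
  | succ n => simp [ins, TEnv.cons]

theorem TD_subst (t : CTerm) : ∀ (x : ℕ) (u : CTerm) (w : Wt) (L : LType),
    TD (t.subst x u) w L ↔ SubP x (TD u) (TD t) w L := by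
  induction t with
  | var n =>
    intro x u w L
    by_cases hn : n = x
    · subst hn
      simp only [CTerm.subst, if_true]
      constructor
      · intro h
        refine ⟨_, w, [L], rfl, ?_, ⟨w, 0, by simp, h, rfl⟩, ?_⟩
        · simp [TEnv.single]
        · rw [rem_single_self, zero_add]
      · rintro ⟨w1, w2, M, rfl, e, m, rfl⟩
        have : M = [L] := by
          have e : (M : Multiset LType) = {L} := by simpa [TEnv.single] using e
          exact Multiset.coe_eq_singleton.1 e
        subst this
        obtain ⟨v1, v2, rfl, h1, h2⟩ := m
        cases h2
        rw [rem_single_self, zero_add, add_zero]; exact h1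
    · have key : ∃ m, (CTerm.var n).subst x u = .var m ∧
          ∀ L, rem x (TEnv.single n L, 0, 0) = (TEnv.single m L, 0, 0) := by
        by_cases hx : x < n
        · refine ⟨n - 1, by simp [CTerm.subst, hn, hx], fun L => ?_⟩
          refine Prod.ext (funext fun i => ?_) rfl
          simp only [rem, TEnv.single]
          split_ifs <;> first | rfl | (exfalso; omega)
        · refine ⟨n, by simp [CTerm.subst, hn, hx], fun L => ?_⟩
          refine Prod.ext (funext fun i => ?_) rfl
          simp only [rem, TEnv.single]
          split_ifs <;> first | rfl | (exfalso; omega)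
      obtain ⟨m, e, hm⟩ := key
      rw [e]
      constructor
      · intro h
        refine ⟨_, 0, [], rfl, ?_, rfl, ?_⟩
        · simp [TEnv.single, Ne.symm hn]
        · rw [hm, add_zero]; exact h
      · rintro ⟨w1, w2, M, rfl, e, hM, rfl⟩
        have : M = [] := by simpa [TEnv.single, Ne.symm hn] using e
        subst this
        cases hM
        rw [hm, add_zero]; rfl
  | lam p t ih =>
    intro x u w L
    constructor
    · rintro ⟨M, q, L', rfl, h⟩
      obtain ⟨w1, w2, N, h1, e, h2, e'⟩ := (ih _ _ _ _).1 h
      obtain ⟨v2, rfl, g2⟩ := (many_ins 0 (TD_lift u 0) N _).1 h2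
      obtain ⟨Γ, ks⟩ := w1
      rw [cons_tail Γ] at e' h1
      rw [rem_cons x (Γ 0) (fun n => Γ (n + 1), ks), cons_ins_add] at e'
      obtain ⟨e1, e2⟩ := Prod.ext_iff.1 e'
      obtain ⟨e3, e4⟩ := cons_inj e1
      refine ⟨(fun n => Γ (n + 1), ks), v2, N, ⟨M, q, L', rfl, ?_⟩, e, g2, Prod.ext e4 e2⟩
      rw [e3]; exact h1
    · rintro ⟨w1, w2, N, ⟨M, q, L', rfl, h1⟩, e, h2, rfl⟩
      refine ⟨M, q, L', rfl, (ih _ _ _ _).2 ⟨_, ins 0 w2, N, h1, e, ?_, ?_⟩⟩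
      · exact (many_ins 0 (TD_lift u 0) N _).2 ⟨_, rfl, h2⟩
      · rw [rem_cons, cons_ins_add]
  | app q t s iht ihs =>
    intro x u w L
    constructor
    · rintro ⟨w1, w2, M, p, rfl, h1, h2⟩
      obtain ⟨a1, b1, N1, p1, e1, m1, rfl⟩ := (iht _ _ _ _).1 h1
      obtain ⟨a2, b2, N2, p2, e2, m2, rfl⟩ := (many_sub (ihs x u) M _).1 h2
      refine ⟨_, b1 + b2, N1 ++ N2, ⟨a1, a2, M, p, rfl, p1, p2⟩, ?_,
        (many_append ..).2 ⟨_, _, rfl, m1, m2⟩, ?_⟩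
      · rw [← Multiset.coe_add, e1, e2]; simp
      · rw [rem_add, rem_add, rem_pure]; abel
    · rintro ⟨_, w2, N, ⟨a1, a2, M, p, rfl, p1, p2⟩, e, m, rfl⟩
      have e' : N.Perm ((a1.1 x).toList ++ (a2.1 x).toList) := by
        rw [← Multiset.coe_eq_coe, e, ← Multiset.coe_add, Multiset.coe_toList,
          Multiset.coe_toList]; simp
      obtain ⟨b1, b2, rfl, m1, m2⟩ := (many_append ..).1 (many_perm _ e' _ m)
      refine ⟨rem x a1 + b1, rem x a2 + b2, M, p, ?_, (iht _ _ _ _).2 ?_,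
        (many_sub (ihs x u) M _).2 ?_⟩
      · rw [rem_add, rem_add, rem_pure]; abel
      · exact ⟨a1, b1, _, p1, Multiset.coe_toList _, m1, rfl⟩
      · exact ⟨a2, b2, _, p2, Multiset.coe_toList _, m2, rfl⟩

/-- Exact subject reduction and expansion at the root. -/
theorem TD_beta (p q : Player) (t u : CTerm) (w : Wt) (L : LType) :
    TD (.app q (.lam p t) u) w L ↔
      ∃ w', w = w' + ((0 : TEnv), Player.gamma p q, 1) ∧ TD (t.subst 0 u) w' L := by
  have hr : ∀ (M : Multiset LType) (w : Wt), rem 0 (TEnv.cons M w.1, w.2) = w := fun M w =>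
    Prod.ext (funext fun n => by simp [rem, TEnv.cons]) rfl
  constructor
  · rintro ⟨w1, w2, M, p', rfl, ⟨M', q', L', e, h1⟩, h2⟩
    cases e
    refine ⟨_, rfl, (TD_subst _ _ _ _ _).2 ⟨_, w2, M, h1, rfl, h2, ?_⟩⟩
    rw [hr]
  · rintro ⟨w', rfl, h⟩
    obtain ⟨⟨Γ, ks⟩, w2, M, h1, e, h2, rfl⟩ := (TD_subst _ _ _ _ _).1 h
    rw [cons_tail Γ] at h1
    refine ⟨(fun n => Γ (n + 1), ks), w2, M, p, ?_, ⟨M, q, L, rfl, ?_⟩, h2⟩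
    · conv_lhs => rw [cons_tail Γ]
      rw [hr (Γ 0) (fun n => Γ (n + 1), ks)]
    · rw [e]; exact h1

end BTI


namespace BTI

/-! ### Head steps and typing -/

/-- Root step of weight `g`. -/
def GRoot (g : ℕ) (t u : CTerm) : Prop :=
  ∃ p q a b, t = .app q (.lam p a) b ∧ u = a.subst 0 b ∧ g = Player.gamma p q

theorem GRoot_of_silent {t u : CTerm} (h : SilentRoot t u) : GRoot 0 t u := by
  cases h with | beta p a b => exact ⟨p, p, a, b, rfl, rfl, by simp [Player.gamma]⟩

theorem GRoot_of_inter {t u : CTerm} (h : InterRoot t u) : GRoot 1 t u := by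
  cases h with
  | beta p a b => exact ⟨p, p.op, a, b, rfl, rfl, by cases p <;> simp [Player.gamma, Player.op]⟩

theorem CSpine.mono' {R S : CTerm → CTerm → Prop} (hRS : ∀ t u, R t u → S t u) {t u : CTerm}
    (h : CSpine R t u) : CSpine S t u := by
  induction h with
  | root h => exact .root (hRS _ _ h)
  | appL p u _ ih => exact .appL p u ih

theorem CHead.mono' {R S : CTerm → CTerm → Prop} (hRS : ∀ t u, R t u → S t u) {t u : CTerm}
    (h : CHead R t u) : CHead S t u := by
  induction h with
  | spine h => exact .spine (CSpine.mono' hRS h)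
  | lam p _ ih => exact .lam p ih

theorem TD_spine {g : ℕ} {t u : CTerm} (h : CSpine (GRoot g) t u) :
    ∀ (w : Wt) (L : LType), TD t w L ↔ ∃ w', w = w' + ((0 : TEnv), g, 1) ∧ TD u w' L := by
  induction h with
  | root h =>
    obtain ⟨p, q, a, b, rfl, rfl, rfl⟩ := h
    exact TD_beta p q a b
  | appL p u _ ih =>
    intro w L
    constructor
    · rintro ⟨w1, w2, M, p', rfl, h1, h2⟩
      obtain ⟨w', rfl, g1⟩ := (ih _ _).1 h1
      exact ⟨_, by abel, w', w2, M, p', rfl, g1, h2⟩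
    · rintro ⟨_, rfl, w1, w2, M, p', rfl, h1, h2⟩
      exact ⟨w1 + (0, g, 1), w2, M, p', by abel, (ih _ _).2 ⟨_, rfl, h1⟩, h2⟩

theorem TD_head {g : ℕ} {t u : CTerm} (h : CHead (GRoot g) t u) :
    ∀ (w : Wt) (L : LType), TD t w L ↔ ∃ w', w = w' + ((0 : TEnv), g, 1) ∧ TD u w' L := by
  induction h with
  | spine h => exact TD_spine h
  | lam p _ ih =>
    intro w L
    constructor
    · rintro ⟨M, q, L', rfl, h⟩
      obtain ⟨⟨Γ, ks⟩, e, h⟩ := (ih _ _).1 h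
      obtain ⟨e1, e2⟩ := Prod.ext_iff.1 e
      have e1 : TEnv.cons M w.1 = Γ := by simpa using e1
      refine ⟨(w.1, ks), Prod.ext (by simp) e2, M, q, L', rfl, ?_⟩
      rw [← e1] at h; exact h
    · rintro ⟨w', rfl, M, q, L', rfl, h⟩
      exact ⟨M, q, L', rfl, (ih _ _).2 ⟨(TEnv.cons M w'.1, w'.2), Prod.ext (by simp) rfl, h⟩⟩

theorem TD_silent {t u : CTerm} (h : HStepTau t u) (w : Wt) (L : LType) :
    TD t w L ↔ ∃ w', w = w' + ((0 : TEnv), 0, 1) ∧ TD u w' L :=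
  TD_head (CHead.mono' (fun _ _ => GRoot_of_silent) h) w L

theorem TD_inter {t u : CTerm} (h : HStepInt t u) (w : Wt) (L : LType) :
    TD t w L ↔ ∃ w', w = w' + ((0 : TEnv), 1, 1) ∧ TD u w' L :=
  TD_head (CHead.mono' (fun _ _ => GRoot_of_inter) h) w L

/-! ### Normal forms -/

inductive Neu : CTerm → Prop
  | var (x : ℕ) : Neu (.var x)
  | app (q : Player) {t : CTerm} (u : CTerm) : Neu t → Neu (.app q t u)

inductive NF : CTerm → Prop
  | neu {t : CTerm} : Neu t → NF t
  | lam (p : Player) {t : CTerm} : NF t → NF (.lam p t)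

theorem beta_step (p q : Player) (t u : CTerm) :
    SilentRoot (.app q (.lam p t) u) (t.subst 0 u) ∨
    InterRoot (.app q (.lam p t) u) (t.subst 0 u) := by
  cases p <;> cases q
  · exact .inl (.beta _ _ _)
  · exact .inr (.beta .white _ _)
  · exact .inr (.beta .black _ _)
  · exact .inl (.beta _ _ _)

theorem spine_cases (t : CTerm) :
    (∃ p a, t = .lam p a) ∨ Neu t ∨ ∃ u, CSpine SilentRoot t u ∨ CSpine InterRoot t u := by
  induction t with
  | var x => exact .inr (.inl (.var x))
  | lam p a _ => exact .inl ⟨p, a, rfl⟩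
  | app q t u iht _ =>
    right
    rcases iht with ⟨p, a, rfl⟩ | h | ⟨v, h | h⟩
    · rcases beta_step p q a u with h | h
      · exact .inr ⟨_, .inl (.root h)⟩
      · exact .inr ⟨_, .inr (.root h)⟩
    · exact .inl (.app q u h)
    · exact .inr ⟨_, .inl (.appL q u h)⟩
    · exact .inr ⟨_, .inr (.appL q u h)⟩

theorem NF_of_HNF (t : CTerm) (h : t.HNF) : NF t := by
  induction t with
  | var x => exact .neu (.var x)
  | lam p a ih =>
    refine .lam p (ih fun u hu => h (.lam p u) ?_)
    exact hu.imp (fun h => CHead.lam p h) (fun h => CHead.lam p h)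
  | app q t u _ _ =>
    rcases spine_cases (.app q t u) with ⟨p, a, e⟩ | hn | ⟨v, hv⟩
    · cases e
    · exact .neu hn
    · exact absurd (hv.imp (fun h => CHead.spine h) (fun h => CHead.spine h)) (h v)

/-! ### Tight typings -/

inductive Flat : LType → Prop
  | atom : Flat .atom
  | arrow (q : Player) {L : LType} : Flat L → Flat (.arrow [] q q L)

inductive PosFlat : LType → Prop
  | atom : PosFlat .atom
  | arrow {M : List LType} (p q : Player) {L : LType} : (∀ Y ∈ M, Flat Y) → PosFlat L →
      PosFlat (.arrow M p q L)

def EnvFlat (Γ : TEnv) : Prop := ∀ n, ∀ Y ∈ Γ n, Flat Y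

theorem neu_typing {t : CTerm} (h : Neu t) :
    ∀ L, Flat L → ∃ Γ s, EnvFlat Γ ∧ TD t (Γ, 0, s) L := by
  induction h with
  | var x =>
    intro L hL
    refine ⟨TEnv.single x L, 0, ?_, rfl⟩
    intro n Y hY
    by_cases h : n = x
    · simp [TEnv.single, h] at hY; rw [hY]; exact hL
    · simp [TEnv.single, h] at hY
  | app q u _ ih =>
    intro L hL
    obtain ⟨Γ, s, hΓ, h⟩ := ih _ (.arrow q hL)
    refine ⟨Γ, s + 1, hΓ, (Γ, 0, s), 0, [], q, ?_, h, rfl⟩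
    simp [Player.gamma]

theorem NF_typing {t : CTerm} (h : NF t) :
    ∃ Γ s L, EnvFlat Γ ∧ PosFlat L ∧ TD t (Γ, 0, s) L := by
  induction h with
  | neu h =>
    obtain ⟨Γ, s, h1, h2⟩ := neu_typing h _ .atom
    exact ⟨Γ, s, _, h1, .atom, h2⟩
  | lam p _ ih =>
    obtain ⟨Γ, s, L, h1, h2, h3⟩ := ih
    refine ⟨fun n => Γ (n + 1), s, .arrow (Γ 0).toList p p L, fun n => h1 (n + 1),
      .arrow p p (fun Y hY => h1 0 Y (by simpa using hY)) h2, _, _, _, rfl, ?_⟩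
    rw [Multiset.coe_toList]
    rw [cons_tail Γ] at h3; exact h3

theorem neu_tight {t : CTerm} (h : Neu t) : ∀ (w : Wt) L, TD t w L →
    EnvFlat w.1 → w.2.1 = 0 ∧ Flat L := by
  induction h with
  | var x =>
    rintro w L rfl hΓ
    exact ⟨rfl, hΓ x L (by simp [TEnv.single])⟩
  | app q u _ ih =>
    rintro w L ⟨w1, w2, M, p, rfl, h1, h2⟩ hΓ
    obtain ⟨h3, h4⟩ := ih _ _ h1 (fun n Y hY => hΓ n Y (by simp [hY]))
    cases h4 with
    | arrow _ h4 =>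
      cases h2
      exact ⟨by simp [h3, Player.gamma], h4⟩

theorem NF_tight {t : CTerm} (h : NF t) : ∀ (w : Wt) L, TD t w L →
    EnvFlat w.1 → PosFlat L → w.2.1 = 0 := by
  induction h with
  | neu h => exact fun w L h1 h2 _ => (neu_tight h w L h1 h2).1
  | lam p _ ih =>
    rintro w L ⟨M, q, L', rfl, h⟩ hΓ hL
    cases hL with
    | arrow _ _ hM hL =>
      refine ih (TEnv.cons M w.1, w.2) _ h (fun n => ?_) hL
      cases n with
      | zero => exact fun Y hY => hM Y (by simpa [TEnv.cons] using hY)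
      | succ n => exact hΓ n

theorem BigStep_typing {t : CTerm} {k : ℕ} (h : BigStep t k) :
    ∃ Γ s L, EnvFlat Γ ∧ PosFlat L ∧ TD t (Γ, k, s) L := by
  induction h with
  | nf h => exact NF_typing (NF_of_HNF _ h)
  | silent h _ ih =>
    obtain ⟨Γ, s, L, h1, h2, h3⟩ := ih
    exact ⟨Γ, s + 1, L, h1, h2, (TD_silent h _ _).2 ⟨_, by simp, h3⟩⟩
  | inter h _ ih =>
    obtain ⟨Γ, s, L, h1, h2, h3⟩ := ih
    exact ⟨Γ, s + 1, L, h1, h2, (TD_inter h _ _).2 ⟨_, by simp, h3⟩⟩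

theorem typing_BigStep : ∀ (s : ℕ) (t : CTerm) (Γ : TEnv) (k : ℕ) (L : LType),
    EnvFlat Γ → PosFlat L → TD t (Γ, k, s) L → BigStep t k := by
  intro s
  induction s using Nat.strong_induction_on with
  | _ s ih =>
    intro t Γ k L hΓ hL h
    by_cases hn : t.HNF
    · have := NF_tight (NF_of_HNF t hn) _ _ h hΓ hL
      simp only at this
      subst this
      exact .nf hn
    · simp only [CTerm.HNF, not_forall, not_not] at hn
      obtain ⟨u, hu | hu⟩ := hn
      · obtain ⟨⟨Γ', k', s'⟩, e, h'⟩ := (TD_silent hu _ _).1 h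
        simp only [Prod.mk_add_mk, Prod.mk.injEq, add_zero] at e
        obtain ⟨rfl, rfl, rfl⟩ := e
        exact .silent hu (ih s' (by omega) _ _ _ _ hΓ hL h')
      · obtain ⟨⟨Γ', k', s'⟩, e, h'⟩ := (TD_inter hu _ _).1 h
        simp only [Prod.mk_add_mk, Prod.mk.injEq, add_zero] at e
        obtain ⟨rfl, rfl, rfl⟩ := e
        exact .inter hu (ih s' (by omega) _ _ _ _ hΓ hL h')

theorem BigStep_iff (t : CTerm) (k : ℕ) :
    BigStep t k ↔ ∃ Γ s L, EnvFlat Γ ∧ PosFlat L ∧ TD t (Γ, k, s) L :=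
  ⟨BigStep_typing, fun ⟨Γ, s, L, h1, h2, h3⟩ => typing_BigStep s t Γ k L h1 h2 h3⟩

/-- `BigStep` along a head step of weight `g`. -/
theorem BigStep_head {g : ℕ} {t u : CTerm} (h : CHead (GRoot g) t u) (k : ℕ) :
    BigStep t k ↔ ∃ r, k = r + g ∧ BigStep u r := by
  constructor
  · intro hk
    obtain ⟨Γ, s, L, h1, h2, h3⟩ := BigStep_typing hk
    obtain ⟨⟨Γ', k', s'⟩, e, h'⟩ := (TD_head h _ _).1 h3
    simp only [Prod.mk_add_mk, Prod.mk.injEq, add_zero] at e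
    obtain ⟨rfl, rfl, rfl⟩ := e
    exact ⟨k', rfl, (BigStep_iff _ _).2 ⟨_, _, _, h1, h2, h'⟩⟩
  · rintro ⟨r, rfl, hr⟩
    obtain ⟨Γ, s, L, h1, h2, h3⟩ := BigStep_typing hr
    exact (BigStep_iff _ _).2 ⟨Γ, s + 1, L, h1, h2, (TD_head h _ _).2 ⟨_, by simp, h3⟩⟩

/-! ### Type preorder is contextual -/

theorem SemLe_lam (p : Player) {t u : CTerm} (h : SemLe t u) : SemLe (.lam p t) (.lam p u) := by
  rintro Γ k s L ⟨M, q, L', rfl, h'⟩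
  obtain ⟨s', h''⟩ := h _ _ _ _ h'
  exact ⟨s', M, q, L', rfl, h''⟩

theorem SemLe_many {t u : CTerm} (h : SemLe t u) (M : List LType) : ∀ Γ k s,
    Many (TD t) (Γ, k, s) M → ∃ s', Many (TD u) (Γ, k, s') M := by
  induction M with
  | nil =>
    intro Γ k s hm
    exact ⟨s, hm⟩
  | cons L M ih =>
    rintro Γ k s ⟨⟨Γ1, k1, s1⟩, ⟨Γ2, k2, s2⟩, e, h1, h2⟩
    simp only [Prod.mk_add_mk, Prod.mk.injEq] at e
    obtain ⟨rfl, rfl, rfl⟩ := e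
    obtain ⟨a, h1⟩ := h _ _ _ _ h1
    obtain ⟨b, h2⟩ := ih _ _ _ h2
    exact ⟨a + b, _, _, rfl, h1, h2⟩

theorem SemLe_app (q : Player) {t u t' u' : CTerm} (h : SemLe t u) (h' : SemLe t' u') :
    SemLe (.app q t t') (.app q u u') := by
  rintro Γ k s L ⟨⟨Γ1, k1, s1⟩, ⟨Γ2, k2, s2⟩, M, p, e, h1, h2⟩
  simp only [Prod.mk_add_mk, Prod.mk.injEq] at e
  obtain ⟨rfl, rfl, rfl⟩ := e
  obtain ⟨a, h1⟩ := h _ _ _ _ h1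
  obtain ⟨b, h2⟩ := SemLe_many h' _ _ _ _ h2
  exact ⟨a + b + 1, _, _, M, p, rfl, h1, h2⟩

theorem SemLe_refl (t : CTerm) : SemLe t t := fun _ _ s _ h => ⟨s, h⟩

theorem SemLe_fill {t u : CTerm} (h : SemLe t u) (C : CCtx) : SemLe (C.fill t) (C.fill u) := by
  induction C with
  | hole => exact h
  | lam p C ih => exact SemLe_lam p ih
  | appL p C s ih => exact SemLe_app p ih (SemLe_refl s)
  | appR p s C ih => exact SemLe_app p (SemLe_refl s) ih

theorem SemLe_BigStep {t u : CTerm} (h : SemLe t u) {k : ℕ} (hk : BigStep t k) : BigStep u k := by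
  obtain ⟨Γ, s, L, h1, h2, h3⟩ := BigStep_typing hk
  obtain ⟨s', h4⟩ := h _ _ _ _ h3
  exact (BigStep_iff _ _).2 ⟨Γ, s', L, h1, h2, h4⟩

theorem type_to_int {t u : Lam} (h : BTypeLe t u) : IntLe t u := fun C _ hk =>
  SemLe_BigStep (SemLe_fill ((CSem_iff _ _).1 h) C) hk

theorem SemLe_of_silent {t u : CTerm} (h : HStepTau t u) : SemLe t u ∧ SemLe u t := by
  constructor
  · intro Γ k s L hs
    obtain ⟨⟨Γ', k', s'⟩, e, h'⟩ := (TD_silent h _ _).1 hs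
    simp only [Prod.mk_add_mk, Prod.mk.injEq, add_zero] at e
    obtain ⟨rfl, rfl, rfl⟩ := e
    exact ⟨s', h'⟩
  · intro Γ k s L hs
    exact ⟨s + 1, (TD_silent h _ _).2 ⟨_, by simp, hs⟩⟩

/-! ### Black lifting -/

theorem tag_lift (t : Lam) (p : Player) : ∀ d, (t.liftAt d).tag p = (t.tag p).liftAt d := by
  induction t with
  | var n => intro d; rfl
  | lam t ih => intro d; simp [Lam.liftAt, Lam.tag, CTerm.liftAt, ih]
  | app t u iht ihu => intro d; simp [Lam.liftAt, Lam.tag, CTerm.liftAt, iht, ihu]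

theorem tag_subst (t : Lam) (p : Player) : ∀ x u,
    (t.subst x u).tag p = (t.tag p).subst x (u.tag p) := by
  induction t with
  | var n =>
    intro x u
    simp only [Lam.subst, Lam.tag, CTerm.subst]
    split_ifs <;> rfl
  | lam t ih => intro x u; simp [Lam.subst, Lam.tag, CTerm.subst, ih, tag_lift]
  | app t u iht ihu => intro x u; simp [Lam.subst, Lam.tag, CTerm.subst, iht, ihu]

theorem tag_spine (p : Player) {t u : Lam} (h : LSpine LBetaRoot t u) :
    CSpine SilentRoot (t.tag p) (u.tag p) := by
  induction h with
  | root h =>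
    cases h with
    | beta a b => rw [tag_subst]; exact .root (.beta p _ _)
  | appL u _ ih => exact .appL p _ ih

theorem tag_head (p : Player) {t u : Lam} (h : LHStep t u) : HStepTau (t.tag p) (u.tag p) := by
  induction h with
  | spine h => exact .spine (tag_spine p h)
  | lam _ ih => exact .lam p ih

/-- Head normal forms of λ-terms. -/
theorem lspine_cases (t : Lam) : (∃ a, t = .lam a) ∨
    (∃ y ts, t = Lam.appList (.var y) ts) ∨ ∃ u, LSpine LBetaRoot t u := by
  induction t with
  | var x => exact .inr (.inl ⟨x, [], rfl⟩)
  | lam a _ => exact .inl ⟨a, rfl⟩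
  | app t u iht _ =>
    right
    rcases iht with ⟨a, rfl⟩ | ⟨y, ts, rfl⟩ | ⟨v, h⟩
    · exact .inr ⟨_, .root (.beta _ _)⟩
    · refine .inl ⟨y, ts ++ [u], ?_⟩
      have : ∀ (ts : List Lam) (h : Lam), Lam.appList h (ts ++ [u]) = .app (h.appList ts) u := by
        intro ts
        induction ts with
        | nil => intro h; rfl
        | cons a ts ih => intro h; exact ih _
      rw [this]
    · exact .inr ⟨_, .appL u h⟩

theorem lhnf_form (t : Lam) (h : t.LHNF) :
    ∃ n y ts, t = Lam.absN n (Lam.appList (.var y) ts) := by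
  induction t with
  | var x => exact ⟨0, x, [], rfl⟩
  | lam a ih =>
    obtain ⟨n, y, ts, rfl⟩ := ih fun u hu => h (.lam u) (LHead.lam hu)
    exact ⟨n + 1, y, ts, rfl⟩
  | app t u _ _ =>
    rcases lspine_cases (.app t u) with ⟨a, e⟩ | ⟨y, ts, e⟩ | ⟨v, hv⟩
    · cases e
    · exact ⟨0, y, ts, e⟩
    · exact absurd (LHead.spine hv) (h v)

theorem SemLe_trans {a b c : CTerm} (h : SemLe a b) (h' : SemLe b c) : SemLe a c := by
  intro Γ k s L hs
  obtain ⟨s', hs'⟩ := h _ _ _ _ hs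
  exact h' _ _ _ _ hs'

theorem SemLe_of_steps {t u : Lam} (h : LHSteps t u) : SemLe (u.tag .black) (t.tag .black) := by
  induction h with
  | refl => exact SemLe_refl _
  | tail _ h ih => exact SemLe_trans (SemLe_of_silent (tag_head _ h)).2 ih

/-! ### Böhm preorder to type preorder -/

/-- Size-bounded typing transfer. -/
def Tr (s : ℕ) (t u : CTerm) : Prop :=
  ∀ Γ k s', s' ≤ s → ∀ L, TD t (Γ, k, s') L → ∃ s'', TD u (Γ, k, s'') L

theorem Tr_lam {s : ℕ} (p : Player) {t u : CTerm} (h : Tr s t u) : Tr s (.lam p t) (.lam p u) := by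
  rintro Γ k s' hs L ⟨M, q, L', rfl, h'⟩
  obtain ⟨s', h''⟩ := h _ _ _ hs _ h'
  exact ⟨s', M, q, L', rfl, h''⟩

theorem Tr_many {b : ℕ} {t u : CTerm} (h : ∀ b' < b, Tr b' t u) (M : List LType) : ∀ Γ k s, s < b →
    Many (TD t) (Γ, k, s) M → ∃ s', Many (TD u) (Γ, k, s') M := by
  induction M with
  | nil =>
    intro Γ k s _ hm
    exact ⟨s, hm⟩
  | cons L M ih =>
    rintro Γ k s hs ⟨⟨Γ1, k1, s1⟩, ⟨Γ2, k2, s2⟩, e, h1, h2⟩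
    simp only [Prod.mk_add_mk, Prod.mk.injEq] at e
    obtain ⟨rfl, rfl, rfl⟩ := e
    obtain ⟨a, h1⟩ := h s1 (by omega) _ _ _ le_rfl _ h1
    obtain ⟨b, h2⟩ := ih _ _ _ (by omega) h2
    exact ⟨a + b, _, _, rfl, h1, h2⟩

theorem Tr_app {b : ℕ} (q : Player) {t u t' u' : CTerm} (h : Tr b t u)
    (h' : ∀ b' < b, Tr b' t' u') : Tr b (.app q t t') (.app q u u') := by
  rintro Γ k s hs L ⟨⟨Γ1, k1, s1⟩, ⟨Γ2, k2, s2⟩, M, p, e, h1, h2⟩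
  simp only [Prod.mk_add_mk, Prod.mk.injEq] at e
  obtain ⟨rfl, rfl, rfl⟩ := e
  obtain ⟨a, h1⟩ := h _ _ _ (by omega) _ h1
  obtain ⟨b, h2⟩ := Tr_many h' _ _ _ _ (by omega) h2
  exact ⟨a + b + 1, _, _, M, p, rfl, h1, h2⟩

theorem Tr_appList {b : ℕ} (ts : List Lam) : ∀ (us : List Lam) (t u : Lam),
    ts.length = us.length → Tr b (t.tag .black) (u.tag .black) →
    (∀ (i : ℕ) (hi : i < ts.length) (hj : i < us.length), ∀ b' < b,
      Tr b' ((ts.get ⟨i, hi⟩).tag .black) ((us.get ⟨i, hj⟩).tag .black)) →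
    Tr b ((t.appList ts).tag .black) ((u.appList us).tag .black) := by
  induction ts with
  | nil =>
    intro us t u e h _
    cases us with
    | nil => exact h
    | cons => simp at e
  | cons a ts ih =>
    intro us t u e h hr
    cases us with
    | nil => simp at e
    | cons c us =>
      refine ih us _ _ (by simpa using e) ?_ ?_
      · exact Tr_app .black h (hr 0 (by simp) (by simp))
      · intro i hi hj
        exact hr (i + 1) (by simpa using hi) (by simpa using hj)

theorem Tr_absN {b : ℕ} (n : ℕ) {t u : Lam} (h : Tr b (t.tag .black) (u.tag .black)) :
    Tr b ((Lam.absN n t).tag .black) ((Lam.absN n u).tag .black) := by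
  induction n with
  | zero => exact h
  | succ n ih => exact Tr_lam .black ih

theorem Tr_steps {t u : Lam} (h : LHSteps t u) (b : ℕ) : Tr b (t.tag .black) (u.tag .black) := by
  induction h with
  | refl => exact fun _ _ s _ _ h => ⟨s, h⟩
  | tail _ h ih =>
    intro Γ k s hs L ht
    obtain ⟨s', h'⟩ := ih _ _ _ hs _ ht
    exact (SemLe_of_silent (tag_head _ h)).1 _ _ _ _ h'

theorem TD_steps_size {t u : Lam} (h : LHSteps t u) : ∀ Γ k s L, TD (t.tag .black) (Γ, k, s) L →
    ∃ s' ≤ s, TD (u.tag .black) (Γ, k, s') L := by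
  induction h with
  | refl => exact fun _ _ s _ h => ⟨s, le_rfl, h⟩
  | tail _ h ih =>
    intro Γ k s L ht
    obtain ⟨s', hs, h'⟩ := ih _ _ _ _ ht
    obtain ⟨⟨Γ', k', s''⟩, e, h''⟩ := (TD_silent (tag_head _ h) _ _).1 h'
    simp only [Prod.mk_add_mk, Prod.mk.injEq, add_zero] at e
    obtain ⟨rfl, rfl, rfl⟩ := e
    exact ⟨s'', by omega, h''⟩

theorem HConv_of_TD : ∀ (s : ℕ) (t : Lam) Γ k L, TD (t.tag .black) (Γ, k, s) L → t.HConv := by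
  intro s
  induction s with
  | zero =>
    intro t Γ k L h
    refine ⟨t, .refl, fun u hu => ?_⟩
    obtain ⟨⟨Γ', k', s''⟩, e, h''⟩ := (TD_silent (tag_head _ hu) _ _).1 h
    simp at e
  | succ s ih =>
    intro t Γ k L h
    by_cases hn : t.LHNF
    · exact ⟨t, .refl, hn⟩
    · simp only [Lam.LHNF, not_forall, not_not] at hn
      obtain ⟨u, hu⟩ := hn
      obtain ⟨⟨Γ', k', s''⟩, e, h''⟩ := (TD_silent (tag_head _ hu) _ _).1 h
      simp only [Prod.mk_add_mk, Prod.mk.injEq, add_zero, add_left_inj] at e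
      obtain ⟨rfl, rfl, rfl⟩ := e
      obtain ⟨v, hv, hv'⟩ := ih _ _ _ _ h''
      exact ⟨v, .head hu hv, hv'⟩

theorem bohm_tr {R : Lam → Lam → Prop} (hR : ∀ a b, R a b → BohmClause R a b) :
    ∀ b t u, R t u → Tr b (t.tag .black) (u.tag .black) := by
  intro b
  induction b using Nat.strong_induction_on with
  | _ b ih =>
    intro t u htu Γ k s hs L h
    rcases hR _ _ htu with hc | ⟨n, y, ts, us, hl, h1, h2, h3⟩
    · exact absurd (HConv_of_TD _ _ _ _ _ h) hc
    · obtain ⟨s', hs', h'⟩ := TD_steps_size h1 _ _ _ _ h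
      have : Tr b ((Lam.absN n (Lam.appList (.var y) ts)).tag .black)
          ((Lam.absN n (Lam.appList (.var y) us)).tag .black) := by
        refine Tr_absN n (Tr_appList ts us _ _ hl (fun _ _ s _ _ h => ⟨s, h⟩) ?_)
        intro i hi hj b' hb'
        exact ih b' hb' _ _ (h3 i hi hj)
      obtain ⟨s'', h''⟩ := this _ _ _ (hs'.trans hs) _ h'
      exact SemLe_of_steps h2 _ _ _ _ h''

theorem bohm_to_type {t u : Lam} (h : BohmLe t u) : BTypeLe t u := by
  obtain ⟨R, hR, htu⟩ := h
  refine (CSem_iff _ _).2 fun Γ k s L h => bohm_tr hR s t u htu _ _ _ le_rfl _ h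

end BTI


namespace BTI

/-! ### Parallel substitution -/

def upR (ξ : ℕ → ℕ) : ℕ → ℕ
  | 0 => 0
  | n + 1 => ξ n + 1

def ren : CTerm → (ℕ → ℕ) → CTerm
  | .var n, ξ => .var (ξ n)
  | .lam p t, ξ => .lam p (ren t (upR ξ))
  | .app q t u, ξ => .app q (ren t ξ) (ren u ξ)

def upS (σ : ℕ → CTerm) : ℕ → CTerm
  | 0 => .var 0
  | n + 1 => (σ n).liftAt 0

def inst : CTerm → (ℕ → CTerm) → CTerm
  | .var n, σ => σ n
  | .lam p t, σ => .lam p (inst t (upS σ))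
  | .app q t u, σ => .app q (inst t σ) (inst u σ)

def scons (a : CTerm) (σ : ℕ → CTerm) : ℕ → CTerm
  | 0 => a
  | n + 1 => σ n

theorem lift_eq_ren (t : CTerm) : ∀ d, t.liftAt d = ren t (fun n => if n < d then n else n + 1) := by
  induction t with
  | var n => intro d; rfl
  | lam p t ih =>
    intro d
    simp only [CTerm.liftAt, ren, ih]
    congr 2
    funext n
    cases n with
    | zero => simp [upR]
    | succ n => simp only [upR]; split_ifs <;> omega
  | app q t u iht ihu => intro d; simp [CTerm.liftAt, ren, iht, ihu]

theorem lift0 (t : CTerm) : t.liftAt 0 = ren t Nat.succ := by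
  rw [lift_eq_ren]; rfl

theorem ren_ren (t : CTerm) : ∀ ξ ζ, ren (ren t ξ) ζ = ren t (fun n => ζ (ξ n)) := by
  induction t with
  | var n => intro ξ ζ; rfl
  | lam p t ih =>
    intro ξ ζ
    simp only [ren, ih]
    congr 2
    funext n
    cases n <;> rfl
  | app q t u iht ihu => intro ξ ζ; simp [ren, iht, ihu]

theorem inst_ren (t : CTerm) : ∀ ξ σ, inst (ren t ξ) σ = inst t (fun n => σ (ξ n)) := by
  induction t with
  | var n => intro ξ ζ; rfl
  | lam p t ih =>
    intro ξ ζ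
    simp only [ren, inst, ih]
    congr 2
    funext n
    cases n <;> rfl
  | app q t u iht ihu => intro ξ ζ; simp [ren, inst, iht, ihu]

theorem ren_inst (t : CTerm) : ∀ σ ξ, ren (inst t σ) ξ = inst t (fun n => ren (σ n) ξ) := by
  induction t with
  | var n => intro ξ ζ; rfl
  | lam p t ih =>
    intro σ ξ
    simp only [ren, inst, ih]
    congr 2
    funext n
    cases n with
    | zero => rfl
    | succ n => simp only [upS, lift0, ren_ren]; rfl
  | app q t u iht ihu => intro ξ ζ; simp [ren, inst, iht, ihu]

theorem inst_inst (t : CTerm) : ∀ σ τ, inst (inst t σ) τ = inst t (fun n => inst (σ n) τ) := by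
  induction t with
  | var n => intro ξ ζ; rfl
  | lam p t ih =>
    intro σ τ
    simp only [inst, ih]
    congr 2
    funext n
    cases n with
    | zero => rfl
    | succ n => simp only [upS, lift0, ren_inst, inst_ren]
  | app q t u iht ihu => intro ξ ζ; simp [inst, iht, ihu]

theorem inst_var (t : CTerm) : inst t .var = t := by
  have hv : upS .var = .var := by
    funext n; cases n <;> simp [upS, CTerm.liftAt]
  induction t with
  | var n => rfl
  | lam p t ih => simp only [inst, hv, ih]
  | app q t u iht ihu => simp [inst, iht, ihu]

theorem subst_eq_inst (t : CTerm) : ∀ x u, t.subst x u =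
    inst t (fun n => if n = x then u else if x < n then .var (n - 1) else .var n) := by
  induction t with
  | var n => intro x u; rfl
  | lam p t ih =>
    intro x u
    simp only [CTerm.subst, inst, ih]
    congr 2
    funext n
    cases n with
    | zero => simp [upS]
    | succ n =>
      simp only [upS]
      rcases lt_trichotomy n x with h | h | h
      · rw [if_neg (by omega), if_neg (by omega), if_neg (by omega), if_neg (by omega)]
        simp [CTerm.liftAt]
      · simp [h]
      · rw [if_neg (by omega), if_pos (by omega), if_neg (by omega), if_pos (by omega)]
        simp only [CTerm.liftAt, CTerm.var.injEq]
        rw [if_neg (by omega)]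
        omega
  | app q t u iht ihu => intro x u; simp [CTerm.subst, inst, iht, ihu]

theorem subst0 (t u : CTerm) : t.subst 0 u = inst t (scons u .var) := by
  rw [subst_eq_inst]
  congr 1
  funext n
  cases n <;> simp [scons]

theorem inst_up_subst (t a : CTerm) (σ : ℕ → CTerm) :
    (inst t (upS σ)).subst 0 a = inst t (scons a σ) := by
  rw [subst0, inst_inst]
  congr 1
  funext n
  cases n with
  | zero => rfl
  | succ n =>
    simp only [upS, lift0, inst_ren, scons]
    exact inst_var _

theorem inst_subst0 (t b : CTerm) (σ : ℕ → CTerm) :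
    inst (t.subst 0 b) σ = (inst t (upS σ)).subst 0 (inst b σ) := by
  rw [inst_up_subst, subst0, inst_inst]
  congr 1
  funext n
  cases n <;> rfl

theorem inst_silent {t u : CTerm} (h : HStepTau t u) : ∀ σ, HStepTau (inst t σ) (inst u σ) := by
  have hs : ∀ {t u : CTerm}, CSpine SilentRoot t u → ∀ σ,
      CSpine SilentRoot (inst t σ) (inst u σ) := by
    intro t u h σ
    induction h with
    | root h =>
      cases h with
      | beta p a b => rw [inst_subst0]; exact .root (.beta p _ _)
    | appL p u _ ih => exact .appL p _ ih
  induction h with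
  | spine h => exact fun σ => .spine (hs h σ)
  | lam p _ ih => exact fun σ => .lam p (ih _)

def fvb : CTerm → ℕ
  | .var n => n + 1
  | .lam _ t => fvb t - 1
  | .app _ t u => max (fvb t) (fvb u)

theorem inst_congr (t : CTerm) : ∀ σ τ, (∀ n < fvb t, σ n = τ n) → inst t σ = inst t τ := by
  induction t with
  | var n => intro σ τ h; exact h n (by simp [fvb])
  | lam p t ih =>
    intro σ τ h
    simp only [inst]
    rw [ih (upS σ) (upS τ)]
    intro n hn
    cases n with
    | zero => rfl
    | succ n => simp only [upS]; rw [h n (by simp only [fvb]; omega)]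
  | app q t u iht ihu =>
    intro σ τ h
    simp only [inst]
    rw [iht σ τ fun n hn => h n (by simp only [fvb]; omega),
      ihu σ τ fun n hn => h n (by simp only [fvb]; omega)]

/-! ### Applications to lists and iterated abstractions -/

def apps : CTerm → List (Player × CTerm) → CTerm
  | t, [] => t
  | t, a :: As => apps (.app a.1 t a.2) As

def lams (p : Player) : ℕ → CTerm → CTerm
  | 0, t => t
  | n + 1, t => .lam p (lams p n t)

theorem apps_append (As : List (Player × CTerm)) : ∀ t Bs,
    apps t (As ++ Bs) = apps (apps t As) Bs := by
  induction As with
  | nil => intro t Bs; rfl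
  | cons a As ih => intro t Bs; exact ih _ _

theorem apps_inst (As : List (Player × CTerm)) : ∀ t σ,
    inst (apps t As) σ = apps (inst t σ) (As.map fun a => (a.1, inst a.2 σ)) := by
  induction As with
  | nil => intro t σ; rfl
  | cons a As ih => intro t σ; exact ih _ _

theorem apps_spine {R : CTerm → CTerm → Prop} (As : List (Player × CTerm)) : ∀ t u,
    CSpine R t u → CSpine R (apps t As) (apps u As) := by
  induction As with
  | nil => exact fun _ _ h => h
  | cons a As ih => exact fun t u h => ih _ _ (.appL _ _ h)

theorem apps_SemLe (As : List (Player × CTerm)) : ∀ t u,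
    SemLe t u → SemLe (apps t As) (apps u As) := by
  induction As with
  | nil => exact fun _ _ h => h
  | cons a As ih => exact fun t u h => ih _ _ (SemLe_app _ h (SemLe_refl _))

theorem apps_TD (As : List (Player × CTerm)) : ∀ t (w : Wt) L, TD (apps t As) w L →
    ∃ (w' : Wt) (L' : LType), TD t w' L' := by
  induction As with
  | nil => exact fun _ _ _ h => ⟨_, _, h⟩
  | cons a As ih =>
    intro t w L h
    obtain ⟨w', L', w1, w2, M, p, rfl, h1, h2⟩ := ih _ _ _ h
    exact ⟨_, _, h1⟩

/-- Weighted evaluation equivalence. -/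
def Red (g : ℕ) (t t' : CTerm) : Prop := ∀ k, BigStep t k ↔ ∃ r, k = r + g ∧ BigStep t' r

theorem Red.refl (t : CTerm) : Red 0 t t := fun k => ⟨fun h => ⟨k, rfl, h⟩, by
  rintro ⟨r, rfl, h⟩; exact h⟩

theorem Red.trans {g g' : ℕ} {a b c : CTerm} (h : Red g a b) (h' : Red g' b c) :
    Red (g + g') a c := by
  intro k
  rw [h k]
  constructor
  · rintro ⟨r, rfl, hr⟩
    obtain ⟨r', rfl, hr'⟩ := (h' r).1 hr
    exact ⟨r', by omega, hr'⟩
  · rintro ⟨r, rfl, hr⟩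
    exact ⟨r + g', by omega, (h' _).2 ⟨r, rfl, hr⟩⟩

theorem Red.of_SemLe {a b : CTerm} (h : SemLe a b) (h' : SemLe b a) : Red 0 a b := fun k =>
  ⟨fun hk => ⟨k, rfl, SemLe_BigStep h hk⟩, by
    rintro ⟨r, rfl, hr⟩; exact SemLe_BigStep h' hr⟩

theorem Red.beta (p q : Player) (t u : CTerm) (As : List (Player × CTerm)) :
    Red (Player.gamma p q) (apps (.app q (.lam p t) u) As) (apps (t.subst 0 u) As) :=
  BigStep_head (.spine (apps_spine As _ _ (.root ⟨p, q, t, u, rfl, rfl, rfl⟩)))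

def cost (p : Player) : List (Player × CTerm) → ℕ
  | [] => 0
  | a :: As => Player.gamma p a.1 + cost p As

theorem cost_append (p : Player) (As Bs : List (Player × CTerm)) :
    cost p (As ++ Bs) = cost p As + cost p Bs := by
  induction As with
  | nil => simp [cost]
  | cons a As ih => simp [cost, ih, add_assoc]

def env : List CTerm → (ℕ → CTerm) → ℕ → CTerm
  | [], σ => σ
  | a :: as, σ => env as (scons a σ)

theorem env_append (as bs : List CTerm) : ∀ σ, env (as ++ bs) σ = env bs (env as σ) := by
  induction as with
  | nil => intro σ; rfl
  | cons a as ih => intro σ; exact ih _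

theorem env_add (as : List CTerm) : ∀ σ j, env as σ (as.length + j) = σ j := by
  induction as with
  | nil => intro σ j; simp [env]
  | cons a as ih =>
    intro σ j
    have := ih (scons a σ) (j + 1)
    simp only [env, List.length_cons]
    rw [show as.length + 1 + j = as.length + (j + 1) by omega, this]; rfl

theorem env_get (as : List CTerm) : ∀ σ i (h : i < as.length),
    env as σ (as.length - 1 - i) = as[i] := by
  induction as with
  | nil => intro σ i h; simp at h
  | cons a as ih =>
    intro σ i h
    cases i with
    | zero => simpa [env, scons] using env_add as (scons a σ) 0
    | succ i =>
      have := ih (scons a σ) i (by simpa using h)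
      simp only [env, List.length_cons, List.getElem_cons_succ]
      rw [← this]; congr 1; omega

theorem env_lt (as : List CTerm) (σ τ : ℕ → CTerm) (n : ℕ) (h : n < as.length) :
    env as σ n = env as τ n := by
  have h1 := env_get as σ (as.length - 1 - n) (by omega)
  have h2 := env_get as τ (as.length - 1 - n) (by omega)
  rw [show as.length - 1 - (as.length - 1 - n) = n by omega] at h1 h2
  rw [h1, h2]

theorem Red.lams (p : Player) (t : CTerm) (Bs As : List (Player × CTerm)) : ∀ σ,
    Red (cost p As) (apps (inst (lams p As.length t) σ) (As ++ Bs))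
      (apps (inst t (env (As.map Prod.snd) σ)) Bs) := by
  induction As with
  | nil => intro σ; exact Red.refl _
  | cons a As ih =>
    intro σ
    have h1 := Red.beta p a.1 (inst (BTI.lams p As.length t) (upS σ)) a.2 (As ++ Bs)
    rw [inst_up_subst] at h1
    exact h1.trans (ih _)

theorem Red.lams' (p : Player) (t : CTerm) (Bs As : List (Player × CTerm)) (n : ℕ)
    (hn : n = As.length) :
    Red (cost p As) (apps (BTI.lams p n t) (As ++ Bs))
      (apps (inst t (env (As.map Prod.snd) .var)) Bs) := by
  subst hn
  have := Red.lams p t Bs As .var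
  rwa [inst_var] at this

def wl (as : List CTerm) : List (Player × CTerm) := as.map (Prod.mk .white)

theorem wl_append (as bs : List CTerm) : wl (as ++ bs) = wl as ++ wl bs := by simp [wl]
theorem wl_snd (as : List CTerm) : (wl as).map Prod.snd = as := by
  simp [wl, Function.comp_def]
theorem wl_length (as : List CTerm) : (wl as).length = as.length := by simp [wl]
theorem cost_ww (as : List CTerm) : cost .white (wl as) = 0 := by
  induction as with
  | nil => rfl
  | cons a as ih => simp only [wl, List.map_cons, cost] at *; simp [ih, Player.gamma]
theorem cost_bw (as : List CTerm) : cost .black (wl as) = as.length := by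
  induction as with
  | nil => rfl
  | cons a as ih => simp only [wl, List.map_cons, cost] at *; simp [ih, Player.gamma]; omega
theorem cost_wb (as : List CTerm) : cost .white (as.map (Prod.mk .black)) = as.length := by
  induction as with
  | nil => rfl
  | cons a as ih => simp only [List.map_cons, cost] at *; simp [ih, Player.gamma]; omega

/-! ### Gadgets -/

/-- `c` dummy interactions in front of `w`. -/
def dd : ℕ → CTerm → CTerm
  | 0, w => w
  | c + 1, w => .app .black (.lam .white (.var 0)) (dd c w)

theorem dd_inst (c : ℕ) (w : CTerm) (σ : ℕ → CTerm) : inst (dd c w) σ = dd c (inst w σ) := by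
  induction c with
  | zero => rfl
  | succ c ih => simp only [dd, inst, ih, upS]

theorem dd_red (c : ℕ) (w : CTerm) (As : List (Player × CTerm)) :
    Red c (apps (dd c w) As) (apps w As) := by
  induction c with
  | zero => exact Red.refl _
  | succ c ih =>
    have h1 := Red.beta .white .black (.var 0) (dd c w) As
    have e : (CTerm.var 0).subst 0 (dd c w) = dd c w := by simp [CTerm.subst]
    rw [e] at h1
    have := h1.trans ih
    rw [show Player.gamma .white .black + c = c + 1 by simp [Player.gamma]; omega] at this
    exact this

/-- The tupling gadget with identifier `id`. -/
def TT (B id : ℕ) : CTerm :=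
  lams .white (2 * B + 1) (apps (dd ((2 * B + 1) * id) (.var 0))
    (wl ((List.range (2 * B)).map fun i => .var (2 * B - i))))

theorem TT_red (B id : ℕ) (As : List (Player × CTerm)) (hA : As.length = 2 * B) (w : CTerm)
    (Bs : List (Player × CTerm)) :
    Red (cost .white As + (2 * B + 1) * id) (apps (TT B id) (As ++ (.white, w) :: Bs))
      (apps w (wl (As.map Prod.snd) ++ Bs)) := by
  have h1 := Red.lams' .white (apps (dd ((2 * B + 1) * id) (.var 0))
    (wl ((List.range (2 * B)).map fun i => .var (2 * B - i)))) Bs (As ++ [(.white, w)])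
    (2 * B + 1) (by simp [hA])
  rw [apps_inst, dd_inst, ← apps_append] at h1
  have e : (wl ((List.range (2 * B)).map fun i => CTerm.var (2 * B - i))).map
      (fun a => (a.1, inst a.2 (env ((As ++ [(Player.white, w)]).map Prod.snd) .var)))
      = wl (As.map Prod.snd) := by
    rw [List.map_append, env_append]
    simp only [wl, List.map_map]
    apply List.ext_getElem
    · simp [hA]
    · intro i h1 h2
      have hi : i < As.length := by simpa using h2
      simp only [List.getElem_map, List.getElem_range, Function.comp, Prod.mk.injEq, true_and,
        List.map_cons, List.map_nil, env, inst]
      rw [show 2 * B - i = ((As.map Prod.snd).length - 1 - i) + 1 by simp; omega]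
      simp only [scons]
      rw [env_get _ _ _ (by simpa using hi)]
      simp
  have e2 : inst (.var 0) (env ((As ++ [(Player.white, w)]).map Prod.snd) .var) = w := by
    rw [List.map_append, env_append]; rfl
  rw [e, e2] at h1
  have h2 := h1.trans (dd_red _ w _)
  rw [cost_append] at h2
  simpa [TT, cost, Player.gamma] using h2

def sel (m i : ℕ) : CTerm := lams .white m (.var (m - 1 - i))

theorem sel_red (zs : List CTerm) (i : ℕ) (hi : i < zs.length) (Bs : List (Player × CTerm)) :
    Red 0 (apps (sel zs.length i) (wl zs ++ Bs)) (apps zs[i] Bs) := by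
  have := Red.lams' .white (.var (zs.length - 1 - i)) Bs (wl zs) zs.length (wl_length zs).symm
  rw [cost_ww, wl_snd] at this
  simp only [inst] at this
  rw [env_get _ _ _ hi] at this
  exact this

def conv (j : ℕ) : CTerm := lams .white j (.lam .white (.var 0))

theorem conv_red (as : List CTerm) (j : ℕ) (hj : j = as.length) (k : ℕ) :
    BigStep (apps (conv j) (wl as)) k ↔ k = 0 := by
  have := Red.lams' .white (.lam .white (.var 0)) [] (wl as) j (by rw [hj, wl_length])
  rw [cost_ww, List.append_nil] at this
  have hn : CTerm.HNF (.lam .white (.var 0)) := by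
    rintro u (h | h)
    · cases h with
      | spine h => cases h with | root h => cases h
      | lam _ h => cases h with | spine h => cases h with | root h => cases h
    · cases h with
      | spine h => cases h with | root h => cases h
      | lam _ h => cases h with | spine h => cases h with | root h => cases h
  rw [conv, this k]
  simp only [inst, upS, apps, add_zero, exists_eq_left']
  constructor
  · intro h
    cases h with
    | nf => rfl
    | silent h _ => exact absurd (Or.inl h) (hn _)
    | inter h _ => exact absurd (Or.inr h) (hn _)
  · rintro rfl; exact .nf hn

def om : CTerm :=
  .app .white (.lam .white (.app .white (.var 0) (.var 0)))
    (.lam .white (.app .white (.var 0) (.var 0)))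

theorem om_div (As : List (Player × CTerm)) (k : ℕ) : ¬ BigStep (apps om As) k := by
  have hs : HStepTau (apps om As) (apps om As) := by
    refine .spine (apps_spine As _ _ (.root ?_))
    exact SilentRoot.beta .white (.app .white (.var 0) (.var 0))
      (.lam .white (.app .white (.var 0) (.var 0)))
  have key : ∀ s Γ k L, ¬ TD (apps om As) (Γ, k, s) L := by
    intro s
    induction s with
    | zero =>
      intro Γ k L h
      obtain ⟨⟨Γ', k', s'⟩, e, h'⟩ := (TD_silent hs _ _).1 h
      simp at e
    | succ s ih =>
      intro Γ k L h
      obtain ⟨⟨Γ', k', s'⟩, e, h'⟩ := (TD_silent hs _ _).1 h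
      simp only [Prod.mk_add_mk, Prod.mk.injEq, add_zero, add_left_inj] at e
      obtain ⟨rfl, rfl, rfl⟩ := e
      exact ih _ _ _ h'
  intro h
  obtain ⟨Γ, s, L, _, _, h⟩ := BigStep_typing h
  exact key _ _ _ _ h

/-! ### The substitution of gadgets and the probe lemma -/

def sg (B L : ℕ) : ℕ → CTerm := fun j => TT B (L + j)

def Ts (B L n : ℕ) : List CTerm := (List.range n).map fun i => TT B (L - 1 - i)

theorem Ts_length (B L n : ℕ) : (Ts B L n).length = n := by simp [Ts]

theorem Ts_env (B L n : ℕ) (h : n ≤ L) : env (Ts B L n) (sg B L) = sg B (L - n) := by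
  induction n with
  | zero => rfl
  | succ n ih =>
    have : Ts B L (n + 1) = Ts B L n ++ [TT B (L - 1 - n)] := by simp [Ts, List.range_succ]
    rw [this, env_append, ih (by omega)]
    funext j
    cases j with
    | zero => simp only [env, scons, sg]; congr 1; omega
    | succ j => simp only [env, scons, sg]; congr 1; omega

theorem Ts_split (B L n N : ℕ) (h : n ≤ N) :
    ∃ rest, Ts B L N = Ts B L n ++ rest ∧ rest.length = N - n := by
  obtain ⟨m, rfl⟩ := Nat.exists_eq_add_of_le h
  refine ⟨((List.range m).map (n + ·)).map fun i => TT B (L - 1 - i), ?_, by simp⟩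
  rw [Ts, List.range_add, List.map_append]; rfl

/-- The black lifting with all free variables replaced by gadgets. -/
def bt (B L : ℕ) (t : Lam) : CTerm := inst (t.tag .black) (sg B L)

theorem tag_appList (ts : List Lam) : ∀ t : Lam, (t.appList ts).tag .black =
    apps (t.tag .black) (ts.map fun s => (.black, s.tag .black)) := by
  induction ts with
  | nil => intro t; rfl
  | cons a ts ih => intro t; exact ih _

theorem tag_absN (n : ℕ) (t : Lam) : (Lam.absN n t).tag .black = lams .black n (t.tag .black) := by
  induction n with
  | zero => rfl
  | succ n ih => simp only [Lam.absN, Lam.tag, lams, ih]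

theorem steps_SemLe_inst {t u : Lam} (h : LHSteps t u) (σ : ℕ → CTerm) :
    SemLe (inst (t.tag .black) σ) (inst (u.tag .black) σ) ∧
    SemLe (inst (u.tag .black) σ) (inst (t.tag .black) σ) := by
  induction h with
  | refl => exact ⟨SemLe_refl _, SemLe_refl _⟩
  | tail _ h ih =>
    have := SemLe_of_silent (inst_silent (tag_head .black h) σ)
    exact ⟨SemLe_trans ih.1 this.1, SemLe_trans this.2 ih.2⟩

theorem probe (B L : ℕ) (t : Lam) (n y : ℕ) (ts : List Lam)
    (ht : LHSteps t (Lam.absN n (Lam.appList (.var y) ts))) (hn : n ≤ B) (hL : B ≤ L)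
    (pre post : List CTerm) (w : CTerm) (hp : ts.length + (B - n) + pre.length = 2 * B) :
    ∃ zs : List CTerm, zs.length = 2 * B ∧
      (∀ (i : ℕ) (hi : i < ts.length) (hz : i < zs.length), zs[i] = bt B (L - n) (ts.get ⟨i, hi⟩)) ∧
      Red (n + ts.length + (2 * B + 1) * (L - n + y))
        (apps (bt B L t) (wl (Ts B L B ++ (pre ++ w :: post)))) (apps w (wl (zs ++ post))) := by
  obtain ⟨rest, hr, hrl⟩ := Ts_split B L n B hn
  refine ⟨ts.map (bt B (L - n)) ++ (rest ++ pre), ?_, ?_, ?_⟩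
  · simp; omega
  · intro i hi hz
    rw [List.getElem_append_left (by simpa using hi)]
    simp
  · have h0 := steps_SemLe_inst ht (sg B L)
    have h1 : Red 0 (apps (bt B L t) (wl (Ts B L B ++ (pre ++ w :: post)))) _ :=
      Red.of_SemLe (apps_SemLe _ _ _ h0.1) (apps_SemLe _ _ _ h0.2)
    rw [hr] at h1
    rw [tag_absN, tag_appList, List.append_assoc, wl_append] at h1
    have h2 := Red.lams .black (apps ((Lam.var y).tag .black)
      (ts.map fun s => (.black, s.tag .black))) (wl (rest ++ (pre ++ w :: post)))
      (wl (Ts B L n)) (sg B L)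
    rw [wl_length, Ts_length, wl_snd, Ts_env B L n (hn.trans hL), cost_bw, Ts_length, apps_inst,
      ← apps_append] at h2
    have h3 := TT_red B (L - n + y) ((ts.map (bt B (L - n))).map (Prod.mk .black) ++ wl (rest ++ pre))
      (by simp [wl]; omega) w (wl post)
    have e : (ts.map fun s => (Player.black, s.tag .black)).map
        (fun a => (a.1, inst a.2 (sg B (L - n)))) ++ wl (rest ++ (pre ++ w :: post)) =
        ((ts.map (bt B (L - n))).map (Prod.mk .black) ++ wl (rest ++ pre)) ++
          (.white, w) :: wl post := by
      simp [wl, bt, Function.comp_def]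
    rw [e] at h2
    rw [cost_append, cost_wb, cost_ww, List.map_append, wl_snd] at h3
    have h4 := (h1.trans h2).trans h3
    rw [hr]
    have e2 : 0 + n + ((ts.map (bt B (L - n))).length + 0 + (2 * B + 1) * (L - n + y)) =
        n + ts.length + (2 * B + 1) * (L - n + y) := by simp; omega
    rw [e2] at h4
    simpa [wl, Function.comp_def] using h4

theorem HConv_of_TD_inst : ∀ (s : ℕ) (t : Lam) σ Γ k L,
    TD (inst (t.tag .black) σ) (Γ, k, s) L → t.HConv := by
  intro s
  induction s with
  | zero =>
    intro t σ Γ k L h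
    refine ⟨t, .refl, fun u hu => ?_⟩
    obtain ⟨⟨Γ', k', s''⟩, e, h''⟩ := (TD_silent (inst_silent (tag_head _ hu) σ) _ _).1 h
    simp at e
  | succ s ih =>
    intro t σ Γ k L h
    by_cases hn : t.LHNF
    · exact ⟨t, .refl, hn⟩
    · simp only [Lam.LHNF, not_forall, not_not] at hn
      obtain ⟨u, hu⟩ := hn
      obtain ⟨⟨Γ', k', s''⟩, e, h''⟩ := (TD_silent (inst_silent (tag_head _ hu) σ) _ _).1 h
      simp only [Prod.mk_add_mk, Prod.mk.injEq, add_zero, add_left_inj] at e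
      obtain ⟨rfl, rfl, rfl⟩ := e
      obtain ⟨v, hv, hv'⟩ := ih _ _ _ _ _ h''
      exact ⟨v, .head hu hv, hv'⟩

def ObsLe (B L : ℕ) (t u : Lam) : Prop := ∀ (as : List CTerm) (k : ℕ),
  BigStep (apps (bt B L t) (wl as)) k → BigStep (apps (bt B L u) (wl as)) k

theorem obs_hconv {B L : ℕ} {t u : Lam} (h : ObsLe B L t u) {n y : ℕ} {ts : List Lam}
    (ht : LHSteps t (Lam.absN n (Lam.appList (.var y) ts))) (hn : n ≤ B) (hL : B ≤ L)
    (hk : ts.length ≤ B) : u.HConv := by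
  obtain ⟨zs, hz, _, hR⟩ := probe B L t n y ts ht hn hL
    (List.replicate (2 * B - (ts.length + (B - n))) om) [] (conv (2 * B)) (by simp; omega)
  have h1 := (hR _).2 ⟨0, rfl, (conv_red _ _ (by simp [hz]) 0).2 rfl⟩
  obtain ⟨Γ, s, L, _, _, h2⟩ := BigStep_typing (h _ _ h1)
  obtain ⟨⟨Γ', k', s'⟩, L', h3⟩ := apps_TD _ _ _ _ h2
  exact HConv_of_TD_inst _ _ _ _ _ _ h3

theorem obs_step {B L : ℕ} {t u : Lam} (h : ObsLe B L t u) {n y n' y' : ℕ} {ts us : List Lam}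
    (ht : LHSteps t (Lam.absN n (Lam.appList (.var y) ts)))
    (hu : LHSteps u (Lam.absN n' (Lam.appList (.var y') us)))
    (hL : B ≤ L) (hn : n ≤ B) (hk : ts.length ≤ B) (hn' : n' ≤ B) (hk' : us.length ≤ B) :
    n = n' ∧ y = y' ∧ ts.length = us.length ∧
      ∀ (i : ℕ) (hi : i < ts.length) (hj : i < us.length),
        ObsLe B (L - n) (ts.get ⟨i, hi⟩) (us.get ⟨i, hj⟩) := by
  obtain ⟨e, he⟩ : ∃ e, ts.length + (B - n) + e = 2 * B :=
    ⟨2 * B - (ts.length + (B - n)), by omega⟩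
  obtain ⟨e', he'⟩ : ∃ e, us.length + (B - n') + e = 2 * B :=
    ⟨2 * B - (us.length + (B - n')), by omega⟩
  have hee : e = e' := by
    by_contra hne
    obtain ⟨zs, hz, _, hR⟩ := probe B L t n y ts ht hn hL (List.replicate e om)
      (List.replicate e' om) (conv (2 * B + e')) (by simpa using he)
    have h1 := h _ _ ((hR _).2 ⟨0, rfl, (conv_red _ _ (by simp [hz]) 0).2 rfl⟩)
    set l := List.replicate e om ++ conv (2 * B + e') :: List.replicate e' om with hl
    have hlen : e' < l.length := by simp [hl]; omega
    have hget : l[e'] = om := by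
      rcases lt_or_gt_of_ne hne with h | h
      · rw [List.getElem_of_eq hl, List.getElem_append_right (by simp; omega)]
        rw [List.getElem_cons]
        simp
        omega
      · rw [List.getElem_of_eq hl, List.getElem_append_left (by simpa using h)]
        simp
    have hsplit : l = l.take e' ++ om :: l.drop (e' + 1) := by
      rw [← hget]; simp
    rw [hsplit] at h1
    obtain ⟨zs', _, _, hR'⟩ := probe B L u n' y' us hu hn' hL (l.take e') (l.drop (e' + 1)) om
      (by rw [List.length_take]; omega)
    obtain ⟨r, _, hr⟩ := (hR' _).1 h1
    exact om_div _ _ hr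
  subst hee
  have hcost : n + ts.length + (2 * B + 1) * (L - n + y) =
      n' + us.length + (2 * B + 1) * (L - n' + y') := by
    obtain ⟨zs, hz, _, hR⟩ := probe B L t n y ts ht hn hL (List.replicate e om)
      [] (conv (2 * B)) (by simpa using he)
    have h1 := h _ _ ((hR _).2 ⟨0, rfl, (conv_red _ _ (by simp [hz]) 0).2 rfl⟩)
    obtain ⟨zs', hz', _, hR'⟩ := probe B L u n' y' us hu hn' hL (List.replicate e om)
      [] (conv (2 * B)) (by simpa using he')
    obtain ⟨r, e1, hr⟩ := (hR' _).1 h1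
    have := (conv_red _ _ (by simp [hz']) r).1 hr
    omega
  have hmod : n + ts.length = n' + us.length := by
    have := congrArg (· % (2 * B + 1)) hcost
    simp only [Nat.add_mul_mod_self_left] at this
    rwa [Nat.mod_eq_of_lt (by omega), Nat.mod_eq_of_lt (by omega)] at this
  have hnn : n = n' := by omega
  subst hnn
  have hll : ts.length = us.length := by omega
  have hyy : y = y' := by
    have h1 : (2 * B + 1) * (L - n + y) = (2 * B + 1) * (L - n + y') := by omega
    have := Nat.eq_of_mul_eq_mul_left (by omega) h1
    omega
  subst hyy
  refine ⟨rfl, rfl, hll, fun i hi hj as k hik => ?_⟩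
  obtain ⟨zs, hz, hzi, hR⟩ := probe B L t n y ts ht hn hL (List.replicate e om)
      as (sel (2 * B) i) (by simpa using he)
  obtain ⟨zs', hz', hzi', hR'⟩ := probe B L u n y us hu hn hL (List.replicate e om)
      as (sel (2 * B) i) (by simpa using he')
  have hs := sel_red zs i (by omega) (wl as)
  have hs' := sel_red zs' i (by omega) (wl as)
  rw [hzi i hi (by omega), hz, ← wl_append] at hs
  rw [hzi' i hj (by omega), hz', ← wl_append] at hs'
  have h1 := h _ _ (((hR.trans hs) _).2 ⟨k, rfl, hik⟩)
  obtain ⟨r, er, hr⟩ := ((hR'.trans hs') _).1 h1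
  have : r = k := by omega
  subst this
  exact hr

/-! ### Approximants of the Böhm preorder -/

theorem exists_parts (t : Lam) : ∃ x : ℕ × ℕ × List Lam,
    t.HConv → LHSteps t (Lam.absN x.1 (Lam.appList (.var x.2.1) x.2.2)) := by
  by_cases h : t.HConv
  · obtain ⟨v, hv, hn⟩ := h
    obtain ⟨n, y, ts, rfl⟩ := lhnf_form v hn
    exact ⟨(n, y, ts), fun _ => hv⟩
  · exact ⟨(0, 0, []), fun h' => absurd h' h⟩

noncomputable def parts (t : Lam) : ℕ × ℕ × List Lam := Classical.choose (exists_parts t)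

theorem parts_spec {t : Lam} (h : t.HConv) :
    LHSteps t (Lam.absN (parts t).1 (Lam.appList (.var (parts t).2.1) (parts t).2.2)) :=
  Classical.choose_spec (exists_parts t) h

def BLe : ℕ → Lam → Lam → Prop
  | 0, _, _ => True
  | d + 1, t, u => t.HConv → u.HConv ∧ (parts t).1 = (parts u).1 ∧ (parts t).2.1 = (parts u).2.1 ∧
      (parts t).2.2.length = (parts u).2.2.length ∧
      ∀ (i : ℕ) (hi : i < (parts t).2.2.length) (hj : i < (parts u).2.2.length),
        BLe d ((parts t).2.2.get ⟨i, hi⟩) ((parts u).2.2.get ⟨i, hj⟩)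

theorem BohmLe_of_BLe {t u : Lam} (h : ∀ d, BLe d t u) : BohmLe t u := by
  refine ⟨fun t u => ∀ d, BLe d t u, ?_, h⟩
  intro a b hab
  by_cases hc : a.HConv
  · right
    obtain ⟨hb, h1, h2, h3, _⟩ := hab 1 hc
    refine ⟨(parts a).1, (parts a).2.1, (parts a).2.2, (parts b).2.2, h3, parts_spec hc, ?_, ?_⟩
    · rw [h1, h2]; exact parts_spec hb
    · intro i hi hj d
      exact (hab (d + 1) hc).2.2.2.2 i hi hj
  · exact .inl hc

def Bd (B : ℕ) : ℕ → Lam → Prop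
  | 0, _ => True
  | d + 1, t => (parts t).1 ≤ B ∧ (parts t).2.2.length ≤ B ∧ ∀ x ∈ (parts t).2.2, Bd B d x

theorem exists_Bd (d : ℕ) : ∀ t, ∃ B, ∀ B' ≥ B, Bd B' d t := by
  induction d with
  | zero => exact fun t => ⟨0, fun _ _ => trivial⟩
  | succ d ih =>
    have hl : ∀ ts : List Lam, ∃ B, ∀ B' ≥ B, ∀ x ∈ ts, Bd B' d x := by
      intro ts
      induction ts with
      | nil => exact ⟨0, by simp⟩
      | cons a ts iht =>
        obtain ⟨B1, h1⟩ := ih a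
        obtain ⟨B2, h2⟩ := iht
        refine ⟨max B1 B2, fun B' hB x hx => ?_⟩
        rcases List.mem_cons.1 hx with rfl | hx
        · exact h1 _ (le_trans (le_max_left _ _) hB)
        · exact h2 _ (le_trans (le_max_right _ _) hB) _ hx
    intro t
    obtain ⟨B, hB⟩ := hl (parts t).2.2
    refine ⟨B + (parts t).1 + (parts t).2.2.length, fun B' hB' => ⟨by omega, by omega, ?_⟩⟩
    exact hB B' (by omega)

theorem BLe_of_obs (B : ℕ) : ∀ d L t u, d * B ≤ L → Bd B d t → Bd B d u → ObsLe B L t u →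
    BLe d t u := by
  intro d
  induction d with
  | zero => exact fun _ _ _ _ _ _ _ => trivial
  | succ d ih =>
    intro L t u hL hbt hbu h hc
    obtain ⟨b1, b2, b3⟩ := hbt
    obtain ⟨c1, c2, c3⟩ := hbu
    have hL' : d * B + B ≤ L := by rw [← Nat.succ_mul]; exact hL
    have hu := obs_hconv h (parts_spec hc) b1 (by omega) b2
    obtain ⟨e1, e2, e3, e4⟩ := obs_step h (parts_spec hc) (parts_spec hu) (by omega) b1 b2 c1 c2
    refine ⟨hu, e1, e2, e3, fun i hi hj => ?_⟩
    exact ih (L - (parts t).1) _ _ (by omega) (b3 _ (List.get_mem _ _)) (c3 _ (List.get_mem _ _))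
      (e4 i hi hj)

/-! ### From the interaction preorder to observations -/

def lamsC : ℕ → CCtx
  | 0 => .hole
  | n + 1 => .lam .white (lamsC n)

def appsC : CCtx → List (Player × CTerm) → CCtx
  | C, [] => C
  | C, a :: As => appsC (.appL a.1 C a.2) As

theorem lamsC_fill (n : ℕ) (t : CTerm) : (lamsC n).fill t = lams .white n t := by
  induction n with
  | zero => rfl
  | succ n ih => simp only [lamsC, CCtx.fill, lams, ih]

theorem appsC_fill (As : List (Player × CTerm)) (t : CTerm) : ∀ C : CCtx,
    (appsC C As).fill t = apps (C.fill t) As := by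
  induction As with
  | nil => intro C; rfl
  | cons a As ih => intro C; exact ih _

theorem close_red (B L F : ℕ) (t : Lam) (hF : fvb (t.tag .black) ≤ F) (as : List CTerm) :
    Red 0 ((appsC (lamsC F) (wl (Ts B (L + F) F) ++ wl as)).fill (t.tag .black))
      (apps (bt B L t) (wl as)) := by
  rw [appsC_fill, lamsC_fill]
  have h := Red.lams' .white (t.tag .black) (wl as) (wl (Ts B (L + F) F)) F
    (by rw [wl_length, Ts_length])
  rw [cost_ww, wl_snd] at h
  have e : inst (t.tag .black) (env (Ts B (L + F) F) .var) = bt B L t := by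
    rw [bt, show sg B L = env (Ts B (L + F) F) (sg B (L + F)) by
      rw [Ts_env _ _ _ (by omega)]; simp]
    exact inst_congr _ _ _ fun n hn => env_lt _ _ _ _ (by rw [Ts_length]; omega)
  rwa [e] at h

theorem obs_of_int {t u : Lam} (h : IntLe t u) (B L : ℕ) : ObsLe B L t u := by
  intro as k hk
  have h1 := close_red B L (max (fvb (t.tag .black)) (fvb (u.tag .black))) t (le_max_left _ _) as
  have h2 := close_red B L (max (fvb (t.tag .black)) (fvb (u.tag .black))) u (le_max_right _ _) as
  obtain ⟨r, rfl, hr⟩ := (h2 _).1 (h _ _ ((h1 k).2 ⟨k, rfl, hk⟩))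
  exact hr

theorem int_to_bohm {t u : Lam} (h : IntLe t u) : BohmLe t u := by
  refine BohmLe_of_BLe fun d => ?_
  obtain ⟨B1, h1⟩ := exists_Bd d t
  obtain ⟨B2, h2⟩ := exists_Bd d u
  exact BLe_of_obs (max B1 B2) d (d * max B1 B2) t u le_rfl (h1 _ (le_max_left _ _))
    (h2 _ (le_max_right _ _)) (obs_of_int h _ _)

end BTI


/-- Main theorem: the Böhm preorder, the black type preorder and the interaction
preorder coincide; consequently the induced λ-theories coincide. -/
theorem bohm_type_interaction_coincide :
    (∀ t u : Lam, (BohmLe t u ↔ BTypeLe t u) ∧ (BTypeLe t u ↔ IntLe t u)) ∧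
    (∀ t u : Lam,
      ((BohmLe t u ∧ BohmLe u t) ↔ (BTypeLe t u ∧ BTypeLe u t)) ∧
      ((BTypeLe t u ∧ BTypeLe u t) ↔ IntEq t u)) := by

  have hBT : ∀ t u : Lam, BohmLe t u ↔ BTypeLe t u := fun t u =>
    ⟨BTI.bohm_to_type, fun h => BTI.int_to_bohm (BTI.type_to_int h)⟩
  have hTI : ∀ t u : Lam, BTypeLe t u ↔ IntLe t u := fun t u =>
    ⟨BTI.type_to_int, fun h => BTI.bohm_to_type (BTI.int_to_bohm h)⟩
  refine ⟨fun t u => ⟨hBT t u, hTI t u⟩, fun t u => ⟨?_, ?_⟩⟩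
  · exact and_congr (hBT t u) (hBT u t)
  · exact and_congr (hTI t u) (hTI u t)
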